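/- arXiv:1902.09146 — 3 statements merged into one kernel-verified Lean document; each statement's English description precedes it below -/
import Mathlib

section
/- Let f ∈ ℂ[x_0,…,x_n]_d with d ≥ 2 be such that the hypersurface V(f) ⊂ ℙ^n is smooth. Then the Hessian determinant hess_f = det(∂²f/∂x_i∂x_j)_{0≤i,j≤n} does not belong to the Jacobian ideal J(f) = (∂f/∂x_0,…,∂f/∂x_n). -/
open MvPolynomial Module

/-- The Hessian determinant `det (∂²f/∂x_i∂x_j)` of a polynomial. -/
noncomputable def hessDet {N : ℕ} (f : MvPolynomial (Fin N) ℂ) :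
    MvPolynomial (Fin N) ℂ :=
  Matrix.det (Matrix.of fun i j => pderiv i (pderiv j f))

/-- The Jacobian ideal `J(f)`, generated by the first order partial derivatives of `f`. -/
noncomputable def jacobianIdeal {N : ℕ} (f : MvPolynomial (Fin N) ℂ) :
    Ideal (MvPolynomial (Fin N) ℂ) :=
  Ideal.span (Set.range fun i => pderiv i f)

/-!
Let `H` be the Hessian matrix of `f` and `X` the vector of the variables. Differentiating Euler's
identity gives `H X = (d - 1) ∇f`, so the statement is about matrices: if the entries of `M X`
generate an ideal whose radical contains all the variables (by the Nullstellensatz, if they have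
no common zero besides the origin), then `det M ∉ (M X)`.

To see this, choose a matrix `B` with `B M X = (X_i ^ (e_i + 1))_i`. The diagonal matrix of the
`X_i ^ e_i` sends `X` to the same vector. The determinant of a matrix `N` is determined modulo
`(N X)` by `N X`, because two choices of a row differ by a Koszul syzygy of the variables and the
cofactors along that row are proportional to `X` modulo `(N X)`. Hence `det B * det M` is congruent
to `∏ X_i ^ e_i` modulo the ideal of the `X_i ^ (e_i + 1)`, which does not contain this monomial.
By Cramer's rule `det B` carries `(M X)` into that ideal, so `det M` is not in `(M X)`.
-/

section KoszulSyzygies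

variable {ι R : Type*} [DecidableEq ι] [CommRing R]

/-- The syzygy `x j • e k - x k • e j` of the family `x`, where `e` is the standard basis. -/
def koszulRelation (x : ι → R) (j k : ι) : ι → R :=
  x j • Pi.single k 1 - x k • Pi.single j 1

/-- The module of Koszul (or trivial) syzygies of the family `x`: the image of the second
differential of the Koszul complex of `x`. -/
def koszulSyzygies (x : ι → R) : Submodule R (ι → R) :=
  Submodule.span R (Set.range fun p : ι × ι => koszulRelation x p.1 p.2)

lemma koszulRelation_mem_koszulSyzygies (x : ι → R) (j k : ι) :
    koszulRelation x j k ∈ koszulSyzygies x :=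
  Submodule.subset_span ⟨(j, k), rfl⟩

variable {x : ι → R}

lemma sum_smul_koszulRelation_apply_self {s : Finset ι} {a : ι} (has : a ∉ s) (c : ι → R) :
    (∑ k ∈ s, c k • koszulRelation x k a) a = ∑ k ∈ s, c k * x k := by
  rw [Finset.sum_apply]
  refine Finset.sum_congr rfl fun k hk => ?_
  simp [koszulRelation, (ne_of_mem_of_not_mem hk has).symm]

lemma sum_smul_koszulRelation_apply_of_notMem {s : Finset ι} {a i : ι} (hia : i ≠ a) (his : i ∉ s)
    (c : ι → R) : (∑ k ∈ s, c k • koszulRelation x k a) i = 0 := by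
  rw [Finset.sum_apply]
  refine Finset.sum_eq_zero fun k hk => ?_
  simp [koszulRelation, hia, (ne_of_mem_of_not_mem hk his).symm]

variable [Fintype ι]

lemma dotProduct_eq_zero_of_mem_koszulSyzygies {v : ι → R} (hv : v ∈ koszulSyzygies x) :
    v ⬝ᵥ x = 0 := by
  induction hv using Submodule.span_induction with
  | mem v hv =>
    obtain ⟨⟨j, k⟩, rfl⟩ := hv
    simp [koszulRelation, sub_dotProduct, mul_comm]
  | zero => exact zero_dotProduct x
  | add v w _ _ hv hw => rw [add_dotProduct, hv, hw, add_zero]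
  | smul r v _ hv => rw [smul_dotProduct, hv, smul_zero]

/-- The hypothesis says that `x` is a weakly regular sequence in every order. -/
lemma mem_koszulSyzygies_of_dotProduct_eq_zero
    (hx : ∀ (s : Finset ι) (a : ι), a ∉ s → ∀ r : R,
      r * x a ∈ Ideal.span (x '' s) → r ∈ Ideal.span (x '' s))
    {v : ι → R} (hv : v ⬝ᵥ x = 0) : v ∈ koszulSyzygies x := by
  suffices H : ∀ (s : Finset ι) (v : ι → R), (∀ i ∉ s, v i = 0) → v ⬝ᵥ x = 0 →
      v ∈ koszulSyzygies x from
    H Finset.univ v (fun i hi => absurd (Finset.mem_univ i) hi) hv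
  intro s
  induction s using Finset.induction_on with
  | empty =>
    intro v hv _
    rw [show v = 0 from funext fun i => hv i (Finset.notMem_empty i)]
    exact zero_mem _
  | insert a s has ih =>
    intro v hsupp hv
    have hsum : v a * x a + ∑ k ∈ s, v k * x k = 0 := by
      rw [← Finset.sum_insert (f := fun k => v k * x k) has, ← hv]
      refine Finset.sum_subset (Finset.subset_univ _) fun i _ hi => ?_
      rw [hsupp i hi, zero_mul]
    have hva : v a ∈ Ideal.span (x '' s) := by
      refine hx s a has _ ?_
      rw [eq_neg_of_add_eq_zero_left hsum]
      exact neg_mem (sum_mem fun k hk =>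
        Ideal.mul_mem_left _ _ (Ideal.subset_span ⟨k, hk, rfl⟩))
    obtain ⟨c, hc⟩ := (Submodule.mem_span_image_finset_iff_exists_fun' R).mp hva
    -- Subtracting this combination of Koszul relations clears the coordinate `a`.
    set w : ι → R := ∑ k ∈ s, c k • koszulRelation x k a
    have hw : w ∈ koszulSyzygies x :=
      sum_mem fun k _ => Submodule.smul_mem _ _ (koszulRelation_mem_koszulSyzygies x k a)
    have hvw : v - w ∈ koszulSyzygies x := by
      refine ih _ (fun i hi => ?_) ?_
      · rcases eq_or_ne i a with rfl | hia
        · have hwi : w i = v i := (sum_smul_koszulRelation_apply_self has c).trans hc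
          rw [Pi.sub_apply, hwi, sub_self]
        · have hwi : w i = 0 := sum_smul_koszulRelation_apply_of_notMem hia hi c
          rw [Pi.sub_apply, hwi, hsupp i (by simp [hia, hi]), sub_zero]
      · rw [sub_dotProduct, hv, dotProduct_eq_zero_of_mem_koszulSyzygies hw, sub_zero]
    simpa using add_mem hvw hw

end KoszulSyzygies

section Determinant

open Matrix

variable {ι R : Type*} [Fintype ι] [DecidableEq ι] [CommRing R]

lemma adjugate_mulVec_mulVec (M : Matrix ι ι R) (x : ι → R) :
    M.adjugate *ᵥ (M *ᵥ x) = M.det • x := by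
  rw [mulVec_mulVec, adjugate_mul, smul_mulVec, one_mulVec]

lemma det_mul_mem_span_range_mulVec (B : Matrix ι ι R) {g : ι → R} {a : R}
    (ha : a ∈ Ideal.span (Set.range g)) : B.det * a ∈ Ideal.span (Set.range (B *ᵥ g)) := by
  obtain ⟨c, rfl⟩ := Ideal.mem_span_range_iff_exists_fun.mp ha
  have hcramer : ∀ i, B.det * g i = ∑ j, B.adjugate i j * (B *ᵥ g) j := fun i =>
    (congrFun (adjugate_mulVec_mulVec B g) i).symm
  simp only [Finset.mul_sum, mul_left_comm B.det, hcramer]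
  exact sum_mem fun i _ => sum_mem fun j _ =>
    Ideal.mul_mem_left _ _ (Ideal.mul_mem_left _ _ (Ideal.subset_span ⟨j, rfl⟩))

variable {M M' : Matrix ι ι R} {x : ι → R} {I : Ideal R}

lemma det_updateRow_koszulRelation_mem {i : ι} (hM : ∀ l ≠ i, (M *ᵥ x) l ∈ I) (j k : ι) :
    (M.updateRow i (koszulRelation x j k)).det ∈ I := by
  -- Modulo `I`, the matrix `T` sends `x` to `x k • e i`; Cramer's rule recovers `x j * det T`.
  set T := M.updateRow i (Pi.single k 1) with hT
  have hTx : T *ᵥ x = Function.update (M *ᵥ x) i (x k) := by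
    rw [hT, updateRow_mulVec, single_one_dotProduct]
  have hcramer : T.det * x j = ∑ l, T.adjugate j l * (T *ᵥ x) l :=
    (congrFun (adjugate_mulVec_mulVec T x) j).symm
  have hdet : (M.updateRow i (koszulRelation x j k)).det =
      ∑ l ∈ Finset.univ.erase i, T.adjugate j l * (T *ᵥ x) l := by
    rw [← Finset.add_sum_erase _ _ (Finset.mem_univ i), hTx, Function.update_self,
      adjugate_apply, hT, updateRow_idem, ← hT, ← hTx] at hcramer
    rw [koszulRelation, sub_eq_add_neg, ← neg_smul, det_updateRow_add, det_updateRow_smul,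
      det_updateRow_smul, ← hT]
    linear_combination hcramer
  rw [hdet]
  refine sum_mem fun l hl => Ideal.mul_mem_left _ _ ?_
  have hli := Finset.ne_of_mem_erase hl
  rw [hTx, Function.update_of_ne hli]
  exact hM l hli

lemma det_updateRow_mem_of_mem_koszulSyzygies {i : ι} (hM : ∀ l ≠ i, (M *ᵥ x) l ∈ I)
    {v : ι → R} (hv : v ∈ koszulSyzygies x) : (M.updateRow i v).det ∈ I := by
  induction hv using Submodule.span_induction with
  | mem v hv =>
    obtain ⟨⟨j, k⟩, rfl⟩ := hv
    exact det_updateRow_koszulRelation_mem hM j k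
  | zero => simp [det_eq_zero_of_row_eq_zero i]
  | add v w _ _ hv hw => rw [det_updateRow_add]; exact add_mem hv hw
  | smul r v _ hv => rw [det_updateRow_smul]; exact I.mul_mem_left r hv

lemma det_sub_det_mem_of_sub_mem_koszulSyzygies (hM : ∀ i, (M *ᵥ x) i ∈ I)
    (hMM' : ∀ i, M' i - M i ∈ koszulSyzygies x) : M'.det - M.det ∈ I := by
  -- Exchange the rows one at a time, `s` being the set of rows already exchanged.
  suffices H : ∀ s : Finset ι, (of (s.piecewise M'.row M.row)).det - M.det ∈ I by
    have huniv := H Finset.univ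
    rwa [Finset.piecewise_univ] at huniv
  intro s
  induction s using Finset.induction_on with
  | empty =>
    rw [Finset.piecewise_empty]
    exact (sub_self M.det).symm ▸ I.zero_mem
  | insert a s has ih =>
    set T : Matrix ι ι R := of (s.piecewise M'.row M.row)
    have hTx : ∀ l, T l ⬝ᵥ x = M l ⬝ᵥ x := by
      intro l
      by_cases hl : l ∈ s
      · have hTl : T l = M' l := Finset.piecewise_eq_of_mem s M'.row M.row hl
        rw [hTl, ← sub_eq_zero, ← sub_dotProduct,
          dotProduct_eq_zero_of_mem_koszulSyzygies (hMM' l)]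
      · have hTl : T l = M l := Finset.piecewise_eq_of_notMem s M'.row M.row hl
        rw [hTl]
    have hTa : T a = M a := Finset.piecewise_eq_of_notMem s M'.row M.row has
    have hrow : of ((insert a s).piecewise M'.row M.row) = T.updateRow a (T a + (M' a - M a)) := by
      rw [hTa, add_sub_cancel, Finset.piecewise_insert]
      rfl
    have hdet : (T.updateRow a (M' a - M a)).det ∈ I :=
      det_updateRow_mem_of_mem_koszulSyzygies (fun l _ => (hTx l ▸ hM l : T l ⬝ᵥ x ∈ I)) (hMM' a)
    rw [hrow, det_updateRow_add, updateRow_eq_self, add_sub_right_comm]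
    exact add_mem ih hdet

end Determinant

section Polynomial

open Matrix

variable {σ R : Type*}

lemma mem_span_X_image_of_mul_X_mem [CommSemiring R] {s : Set σ} {a : σ} (ha : a ∉ s)
    {r : MvPolynomial σ R} (hr : r * X a ∈ Ideal.span (X '' s)) : r ∈ Ideal.span (X '' s) := by
  rw [mem_ideal_span_X_image] at hr ⊢
  intro m hm
  obtain ⟨i, his, hi⟩ := hr (m + Finsupp.single a 1) (by simpa [support_mul_X] using hm)
  refine ⟨i, his, ?_⟩
  simpa [Finsupp.single_eq_of_ne (ne_of_mem_of_not_mem his ha)] using hi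

lemma prod_X_pow_notMem_span_X_pow_succ [Fintype σ] [CommSemiring R] [Nontrivial R] (e : σ → ℕ) :
    (∏ i, X i ^ e i : MvPolynomial σ R) ∉ Ideal.span (Set.range fun i => X i ^ (e i + 1)) := by
  classical
  have hrange : (Set.range fun i => (X i ^ (e i + 1) : MvPolynomial σ R)) =
      (fun m => monomial m 1) '' Set.range fun i => Finsupp.single i (e i + 1) := by
    rw [← Set.range_comp]
    exact congrArg Set.range (funext fun i => X_pow_eq_monomial)
  have hprod : (∏ i, X i ^ e i : MvPolynomial σ R) =
      monomial (∑ i, Finsupp.single i (e i)) 1 := by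
    simp only [X_pow_eq_monomial, monomial_sum_one]
  rw [hrange, hprod, mem_ideal_span_monomial_image]
  intro h
  obtain ⟨_, ⟨i, rfl⟩, hi⟩ :=
    h (∑ i, Finsupp.single i (e i)) (by simp [MvPolynomial.mem_support_iff])
  simpa [Finsupp.finsetSum_apply, Finsupp.single_apply] using hi i

lemma X_mem_radical_span_range {ι k K : Type*} [Finite σ] [Field k] [Field K] [IsAlgClosed K]
    [Algebra k K] {g : ι → MvPolynomial σ k}
    (hg : ∀ x : σ → K, x ≠ 0 → ∃ i, aeval x (g i) ≠ 0) (j : σ) :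
    X j ∈ (Ideal.span (Set.range g)).radical := by
  rw [← vanishingIdeal_zeroLocus_eq_radical (K := K), zeroLocus_span, mem_vanishingIdeal_iff]
  intro x hx
  have hx0 : x = 0 := by
    by_contra hne
    obtain ⟨i, hi⟩ := hg x hne
    exact hi (hx (g i) ⟨i, rfl⟩)
  rw [aeval_X, hx0, Pi.zero_apply]

section

variable [Fintype σ] [DecidableEq σ] [CommRing R] {M M' : Matrix σ σ (MvPolynomial σ R)}

lemma mem_koszulSyzygies_X_of_dotProduct_eq_zero {v : σ → MvPolynomial σ R} (hv : v ⬝ᵥ X = 0) :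
    v ∈ koszulSyzygies X := by
  refine mem_koszulSyzygies_of_dotProduct_eq_zero (fun s a has r hr => ?_) hv
  have has' : a ∉ (s : Set σ) := Finset.mem_coe.not.mpr has
  exact mem_span_X_image_of_mul_X_mem has' hr

lemma det_sub_det_mem_of_mulVec_X_eq (h : M' *ᵥ X = M *ᵥ X) :
    M'.det - M.det ∈ Ideal.span (Set.range (M *ᵥ X)) := by
  refine det_sub_det_mem_of_sub_mem_koszulSyzygies (x := X)
    (fun i => Ideal.subset_span ⟨i, rfl⟩) fun i => mem_koszulSyzygies_X_of_dotProduct_eq_zero ?_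
  rw [sub_dotProduct, sub_eq_zero]
  exact congrFun h i

theorem det_notMem_span_range_mulVec_X [Nontrivial R]
    (hM : ∀ i, X i ∈ (Ideal.span (Set.range (M *ᵥ X))).radical) :
    M.det ∉ Ideal.span (Set.range (M *ᵥ X)) := by
  intro hdet
  have hpow : ∀ i, ∃ e : ℕ, X i ^ (e + 1) ∈ Ideal.span (Set.range (M *ᵥ X)) := fun i =>
    (hM i).imp fun e he => Ideal.pow_mem_of_pow_mem _ he e.le_succ
  choose e he using hpow
  simp only [Ideal.mem_span_range_iff_exists_fun] at he
  choose B hB using he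
  have hBM : (of B * M) *ᵥ X = fun i => X i ^ (e i + 1) :=
    (mulVec_mulVec X (of B) M).symm.trans (funext hB)
  have hdiag : diagonal (fun i => X i ^ e i) *ᵥ X = (of B * M) *ᵥ X := by
    ext1 i
    rw [hBM, mulVec_diagonal, ← pow_succ]
  have hBM_det : (of B * M).det ∈ Ideal.span (Set.range ((of B * M) *ᵥ X)) := by
    rw [det_mul, ← mulVec_mulVec]
    exact det_mul_mem_span_range_mulVec _ hdet
  have hprod := add_mem (det_sub_det_mem_of_mulVec_X_eq hdiag) hBM_det
  rw [sub_add_cancel, det_diagonal, hBM] at hprod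
  exact prod_X_pow_notMem_span_X_pow_succ e hprod

end

end Polynomial

section Hessian

open Matrix

variable {σ R : Type*}

/-- The Hessian matrix of a polynomial over an arbitrary coefficient ring; `hessDet f` is its
determinant for `f` over `ℂ`. -/
noncomputable def hessianMatrix [CommSemiring R] (f : MvPolynomial σ R) :
    Matrix σ σ (MvPolynomial σ R) :=
  of fun i j => pderiv i (pderiv j f)

variable [Fintype σ] [CommRing R] {f : MvPolynomial σ R} {d : ℕ}

lemma hessianMatrix_mulVec_X (hf : f.IsHomogeneous d) :
    hessianMatrix f *ᵥ X = (C ((d : R) - 1) : MvPolynomial σ R) • fun i => pderiv i f := by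
  classical
  ext1 i
  have heuler : ∑ j, X j * pderiv i (pderiv j f) + pderiv i f = d * pderiv i f := by
    simpa [pderiv_X, Pi.single_apply, Finset.sum_add_distrib] using
      congrArg (pderiv i) hf.sum_X_mul_pderiv
  have hmulVec : (hessianMatrix f *ᵥ X) i = ∑ j, X j * pderiv i (pderiv j f) := by
    simp only [mulVec, dotProduct, hessianMatrix, of_apply, mul_comm]
  rw [hmulVec, Pi.smul_apply, smul_eq_mul, C_sub, C_1, map_natCast]
  linear_combination heuler

theorem det_hessianMatrix_notMem_of_X_mem_radical [DecidableEq σ] [Nontrivial R]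
    (hd : IsUnit ((d : R) - 1)) (hf : f.IsHomogeneous d)
    (hX : ∀ i, X i ∈ (Ideal.span (Set.range fun j => pderiv j f)).radical) :
    (hessianMatrix f).det ∉ Ideal.span (Set.range fun j => pderiv j f) := by
  have hspan : Ideal.span (Set.range (hessianMatrix f *ᵥ X)) =
      Ideal.span (Set.range fun j => pderiv j f) := by
    rw [hessianMatrix_mulVec_X hf, Pi.smul_def, Set.range_smul]
    exact Submodule.span_smul_eq_of_isUnit _ _ (hd.map C)
  rw [← hspan] at hX ⊢
  exact det_notMem_span_range_mulVec_X hX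

theorem hessian_not_mem_jacobian_of_smooth_general {k K : Type*} [DecidableEq σ]
    [Field k] [Field K] [IsAlgClosed K] [Algebra k K] (hd : (d : k) ≠ 1)
    (f : MvPolynomial σ k) (hf : f.IsHomogeneous d)
    (hsm : ∀ x : σ → K, x ≠ 0 → ∃ i, aeval x (pderiv i f) ≠ 0) :
    (hessianMatrix f).det ∉ Ideal.span (Set.range fun i => pderiv i f) :=
  det_hessianMatrix_notMem_of_X_mem_radical (sub_ne_zero.mpr hd).isUnit hf
    (X_mem_radical_span_range hsm)

end Hessian

/-- **Proposition.** If `f` is homogeneous of degree `d ≥ 2` and the hypersurface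
`V(f) ⊂ ℙ^n` is smooth (the partial derivatives of `f` have no common zero in
`ℂ^{n+1} ∖ {0}`), then the Hessian determinant of `f` does not belong to the
Jacobian ideal `J(f)`. -/
theorem hessian_not_mem_jacobian_of_smooth
    {n d : ℕ} (hd : 2 ≤ d)
    (f : MvPolynomial (Fin (n + 1)) ℂ) (hf : f.IsHomogeneous d)
    (hsm : ∀ x : Fin (n + 1) → ℂ, x ≠ 0 →
      ∃ i : Fin (n + 1), eval x (pderiv i f) ≠ 0) :
    hessDet f ∉ jacobianIdeal f :=
  hessian_not_mem_jacobian_of_smooth_general (K := ℂ) (by exact_mod_cast (by omega : d ≠ 1)) f hf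
    (by simpa only [aeval_eq_eval] using hsm)
end

section
/- Let f ∈ ℂ[x_0,…,x_n]_d be a reduced homogeneous polynomial such that the hypersurface V(f) ⊂ ℙ^n is singular but has only isolated singularities (its singular locus is a nonempty finite set). Then the Hessian determinant hess_f = det(∂²f/∂x_i∂x_j)_{0≤i,j≤n} belongs to the Jacobian ideal J(f) = (∂f/∂x_0,…,∂f/∂x_n). -/
/-!
By Euler's relation `(d - 1) • ∇f = H x`, where `H` is the Hessian matrix. The theorem is thus an
instance of a general fact: if the entries of `F = A x` generate a homogeneous ideal whose radical
does not contain the ideal `𝔪` of the variables, then `det A ∈ (F)`.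

To see this, perturb `F` to `G i = x i ^ (r + 1) + F i` for large `r`. The leading forms of the
`G i` are powers of the variables, so `q = (G)` has a finite-dimensional quotient on which the
global residue is a nondegenerate form. By Cramer's rule `det (A + diag (x i ^ r))` is killed by `𝔪`
modulo `q`. If it were not in `(F) + 𝔪 ^ r`, duality would give a `v` that multiplies
`(F) + 𝔪 ^ r` into `q` but not the determinant; then `v(0) ≠ 0`, and comparing degree `r` parts in
`v * x j ^ r ∈ q ⊆ (F) + 𝔪 ^ (r + 1)` puts every `x j ^ r` into `(F)`, a contradiction. Hence
`det A ∈ (F) + 𝔪 ^ r`, and for large `r` homogeneity of `(F)` gives `det A ∈ (F)`.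
-/

open MvPolynomial Module

/-- The singular locus of `V(f)`, viewed as the set of lines (points of `ℙ^n`)
spanned by nonzero vectors at which all first order partial derivatives of `f` vanish. -/
noncomputable def singularLines {N : ℕ} (f : MvPolynomial (Fin N) ℂ) :
    Set (Submodule ℂ (Fin N → ℂ)) :=
  {L | ∃ x : Fin N → ℂ, x ≠ 0 ∧ L = Submodule.span ℂ {x} ∧
    ∀ i : Fin N, eval x (pderiv i f) = 0}

section Filtration

variable {R M : Type*} [Ring R] [AddCommGroup M] [Module R M]
  {V : ℕ → Submodule R M} {U : M →ₗ[R] M}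

theorem exists_mem_filtration_apply_eq (hV : Monotone V) (hV₀ : V 0 = ⊥)
    (hU : ∀ n, ∀ x ∈ V (n + 1), U x - x ∈ V n) {n : ℕ} {x : M} (hx : x ∈ V n) :
    ∃ y ∈ V n, U y = x := by
  induction n generalizing x with
  | zero => exact ⟨0, zero_mem _, by simpa [hV₀, eq_comm] using hx⟩
  | succ n ih =>
    obtain ⟨y, hy, hUy⟩ := ih (hU n x hx)
    exact ⟨x - y, sub_mem hx (hV n.le_succ hy), by rw [map_sub, hUy, sub_sub_cancel]⟩

theorem bijective_of_filtration (hV : Monotone V) (hV₀ : V 0 = ⊥) (hV_top : ∀ x, ∃ n, x ∈ V n)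
    (hU : ∀ n, ∀ x ∈ V (n + 1), U x - x ∈ V n) : Function.Bijective U := by
  have eq_zero_of_mem (n : ℕ) (x : M) (hx : x ∈ V n) (hUx : U x = 0) : x = 0 := by
    induction n with
    | zero => simpa [hV₀] using hx
    | succ n ih => exact ih (by simpa [hUx] using hU n x hx)
  refine ⟨(injective_iff_map_eq_zero U).mpr fun x hUx => ?_, fun x => ?_⟩
  · obtain ⟨n, hx⟩ := hV_top x
    exact eq_zero_of_mem n x hx hUx
  · obtain ⟨n, hx⟩ := hV_top x
    obtain ⟨y, -, hy⟩ := exists_mem_filtration_apply_eq hV hV₀ hU hx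
    exact ⟨y, hy⟩

end Filtration

section DegreeFiltration

variable {σ R : Type*} [CommSemiring R]

variable (σ R) in
/-- The polynomials of total degree `< n`. Unlike `restrictTotalDegree`, this filtration
starts with `⊥`. -/
noncomputable def totalDegreeLT (n : ℕ) : Submodule R (MvPolynomial σ R) :=
  restrictSupport R {m | m.degree < n}

theorem totalDegreeLT_monotone : Monotone (totalDegreeLT σ R) := fun _ _ hab =>
  restrictSupport_mono R fun _ hm => lt_of_lt_of_le hm hab

theorem totalDegreeLT_zero : totalDegreeLT σ R 0 = ⊥ := by
  simp [totalDegreeLT, restrictSupport_eq_span]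

theorem mem_totalDegreeLT_succ {n : ℕ} {p : MvPolynomial σ R} :
    p ∈ totalDegreeLT σ R (n + 1) ↔ p.totalDegree ≤ n := by
  rw [← mem_restrictTotalDegree, totalDegreeLT, restrictTotalDegree]
  simp only [Nat.lt_succ_iff, Finsupp.sum]
  rfl

theorem monomial_mem_totalDegreeLT (m : σ →₀ ℕ) :
    monomial m 1 ∈ totalDegreeLT σ R (m.degree + 1) :=
  (monomial_mem_restrictSupport R).mpr (Or.inl m.degree.lt_succ_self)

theorem coeff_eq_zero_of_mem_totalDegreeLT {n : ℕ} {p : MvPolynomial σ R} {m : σ →₀ ℕ}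
    (hp : p ∈ totalDegreeLT σ R n) (hm : n ≤ m.degree) : coeff m p = 0 := by
  by_contra hne
  exact hm.not_gt (hp (mem_support_iff.mpr hne))

theorem mul_mem_totalDegreeLT {a b : ℕ} {p q : MvPolynomial σ R} (hp : p ∈ totalDegreeLT σ R a)
    (hq : q ∈ totalDegreeLT σ R (b + 1)) : p * q ∈ totalDegreeLT σ R (a + b) := by
  have hpq := Submodule.mul_mem_mul hp hq
  rw [totalDegreeLT, totalDegreeLT, ← restrictSupport_add] at hpq
  refine restrictSupport_mono R ?_ hpq
  rintro _ ⟨k, hk : k.degree < a, l, hl : l.degree < b + 1, rfl⟩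
  rw [Set.mem_ofPred_eq, map_add]
  omega

end DegreeFiltration

section ReplacePowers

variable {σ R : Type*} [CommRing R] {r : σ →₀ ℕ} {G : σ → MvPolynomial σ R}

theorem exponent_induction_on (r : σ →₀ ℕ) {P : (σ →₀ ℕ) → Prop} (m : σ →₀ ℕ)
    (le : ∀ m ≤ r, P m) (add_single : ∀ m i, P m → P (Finsupp.single i (r i + 1) + m)) : P m := by
  induction m using WellFoundedLT.induction with
  | ind m ih =>
    by_cases hm : m ≤ r
    · exact le m hm
    · obtain ⟨i, hi⟩ : ∃ i, r i < m i := by simpa [Finsupp.le_def] using hm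
      have him : Finsupp.single i (r i + 1) ≤ m := Finsupp.single_le_iff.mpr hi
      rw [← add_tsub_cancel_of_le him]
      refine add_single _ i (ih _ ?_)
      refine lt_of_le_of_ne tsub_le_self fun h => ?_
      have hi_sub : m i - (r i + 1) = m i := by simpa using DFunLike.congr_fun h i
      omega

/-- The `R`-linear map which replaces in each monomial every factor `X i ^ (r i + 1)` by `G i`:
`X i ^ k` becomes `X i ^ b * G i ^ a` for `k = a * (r i + 1) + b` with `b ≤ r i`. -/
noncomputable def replacePowers (r : σ →₀ ℕ) (G : σ → MvPolynomial σ R) :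
    MvPolynomial σ R →ₗ[R] MvPolynomial σ R :=
  (basisMonomials σ R).constr R fun m =>
    m.prod fun i k => X i ^ (k % (r i + 1)) * G i ^ (k / (r i + 1))

theorem replacePowers_monomial (m : σ →₀ ℕ) :
    replacePowers r G (monomial m 1) =
      m.prod fun i k => X i ^ (k % (r i + 1)) * G i ^ (k / (r i + 1)) :=
  (basisMonomials σ R).constr_basis R _ m

theorem replacePowers_monomial_of_le {m : σ →₀ ℕ} (hm : m ≤ r) :
    replacePowers r G (monomial m 1) = monomial m 1 := by
  rw [replacePowers_monomial, monomial_eq, C_1, one_mul]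
  refine Finsupp.prod_congr fun i _ => ?_
  have hi : m i < r i + 1 := Nat.lt_succ_of_le (hm i)
  rw [Nat.mod_eq_of_lt hi, Nat.div_eq_of_lt hi, pow_zero, mul_one]

theorem replacePowers_monomial_single_add (i : σ) (m : σ →₀ ℕ) :
    replacePowers r G (monomial (Finsupp.single i (r i + 1) + m) 1) =
      G i * replacePowers r G (monomial m 1) := by
  classical
  set φ : σ → ℕ → MvPolynomial σ R := fun i k => X i ^ (k % (r i + 1)) * G i ^ (k / (r i + 1))
  have hφ₀ (i : σ) : φ i 0 = 1 := by simp [φ]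
  have hφ_add (k : ℕ) : φ i (r i + 1 + k) = G i * φ i k := by
    simp only [φ, Nat.add_mod_left, Nat.add_div_left k (Nat.succ_pos (r i)), pow_succ]
    ring
  rw [replacePowers_monomial, replacePowers_monomial,
    ← Finsupp.mul_prod_erase' _ i φ hφ₀, ← Finsupp.mul_prod_erase' m i φ hφ₀, ← mul_assoc]
  simp [hφ_add, Finsupp.erase_add]

theorem replacePowers_X_pow_mul (i : σ) (p : MvPolynomial σ R) :
    replacePowers r G (X i ^ (r i + 1) * p) = G i * replacePowers r G p := by
  suffices (replacePowers r G).comp (LinearMap.mulLeft R (X i ^ (r i + 1))) =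
      (LinearMap.mulLeft R (G i)).comp (replacePowers r G) from LinearMap.congr_fun this p
  refine (basisMonomials σ R).ext fun m => ?_
  simp only [LinearMap.comp_apply, LinearMap.mulLeft_apply, coe_basisMonomials,
    ← monomial_single_add, replacePowers_monomial_single_add]

theorem replacePowers_monomial_sub_mem
    (hG : ∀ i, G i - X i ^ (r i + 1) ∈ totalDegreeLT σ R (r i + 1)) (m : σ →₀ ℕ) :
    replacePowers r G (monomial m 1) - monomial m 1 ∈ totalDegreeLT σ R m.degree := by
  induction m using exponent_induction_on r with
  | le m hm => rw [replacePowers_monomial_of_le hm, sub_self]; exact zero_mem _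
  | add_single m i ih =>
    have hU : replacePowers r G (monomial m 1) ∈ totalDegreeLT σ R (m.degree + 1) := by
      rw [← sub_add_cancel (replacePowers r G (monomial m 1)) (monomial m 1)]
      exact add_mem (totalDegreeLT_monotone (Nat.le_succ _) ih) (monomial_mem_totalDegreeLT m)
    have hsplit : G i * replacePowers r G (monomial m 1) - X i ^ (r i + 1) * monomial m 1 =
        (G i - X i ^ (r i + 1)) * replacePowers r G (monomial m 1) +
          (replacePowers r G (monomial m 1) - monomial m 1) * X i ^ (r i + 1) := by
      ring
    rw [monomial_single_add, replacePowers_X_pow_mul, hsplit, map_add, Finsupp.degree_single]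
    refine add_mem (mul_mem_totalDegreeLT (hG i) hU) ?_
    rw [add_comm]
    refine mul_mem_totalDegreeLT ih ?_
    rw [X_pow_eq_monomial]
    simpa using monomial_mem_totalDegreeLT (R := R) (Finsupp.single i (r i + 1))

theorem replacePowers_sub_mem (hG : ∀ i, G i - X i ^ (r i + 1) ∈ totalDegreeLT σ R (r i + 1))
    (n : ℕ) (p : MvPolynomial σ R) (hp : p ∈ totalDegreeLT σ R (n + 1)) :
    replacePowers r G p - p ∈ totalDegreeLT σ R n := by
  rw [totalDegreeLT, restrictSupport_eq_span] at hp
  induction hp using Submodule.span_induction with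
  | mem x hx =>
    obtain ⟨m, hm, rfl⟩ := hx
    exact totalDegreeLT_monotone (Nat.le_of_lt_succ hm)
      (replacePowers_monomial_sub_mem hG m)
  | zero => simp
  | add x y _ _ hx hy => simpa [add_sub_add_comm] using add_mem hx hy
  | smul a x _ hx => simpa [smul_sub] using Submodule.smul_mem _ a hx

theorem bijective_replacePowers
    (hG : ∀ i, G i - X i ^ (r i + 1) ∈ totalDegreeLT σ R (r i + 1)) :
    Function.Bijective (replacePowers r G) :=
  bijective_of_filtration totalDegreeLT_monotone totalDegreeLT_zero
    (fun p => ⟨_, mem_totalDegreeLT_succ.mpr (le_refl p.totalDegree)⟩) (replacePowers_sub_mem hG)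

theorem replacePowers_monomial_mem_sup (m : σ →₀ ℕ) :
    replacePowers r G (monomial m 1) ∈
      restrictSupport R (Set.Iic r) ⊔ (Ideal.span (Set.range G)).restrictScalars R := by
  induction m using exponent_induction_on r with
  | le m hm =>
    rw [replacePowers_monomial_of_le hm]
    exact Submodule.mem_sup_left ((monomial_mem_restrictSupport R).mpr (Or.inl hm))
  | add_single m i _ =>
    rw [monomial_single_add, replacePowers_X_pow_mul]
    exact Submodule.mem_sup_right
      (Ideal.mul_mem_right _ _ (Ideal.subset_span (Set.mem_range_self i)))

theorem exists_mem_restrictSupport_sub_mem_span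
    (hG : ∀ i, G i - X i ^ (r i + 1) ∈ totalDegreeLT σ R (r i + 1)) (p : MvPolynomial σ R) :
    ∃ b ∈ restrictSupport R (Set.Iic r), p - b ∈ Ideal.span (Set.range G) := by
  have hrange : LinearMap.range (replacePowers r G) ≤
      restrictSupport R (Set.Iic r) ⊔ (Ideal.span (Set.range G)).restrictScalars R := by
    rw [LinearMap.range_eq_map, ← (basisMonomials σ R).span_eq, Submodule.map_span_le]
    rintro _ ⟨m, rfl⟩
    exact replacePowers_monomial_mem_sup m
  obtain ⟨b, hb, g, hg, hbg⟩ :=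
    Submodule.mem_sup.mp (hrange ((bijective_replacePowers hG).surjective p))
  exact ⟨b, hb, by rwa [← hbg, add_sub_cancel_left]⟩

theorem finite_quotient_span
    (hG : ∀ i, G i - X i ^ (r i + 1) ∈ totalDegreeLT σ R (r i + 1)) :
    Module.Finite R (MvPolynomial σ R ⧸ Ideal.span (Set.range G)) := by
  have : Finite (Set.Iic r) := by classical exact Set.finite_Iic r
  have : Module.Finite R (restrictSupport R (Set.Iic r)) :=
    Module.Finite.of_basis (basisRestrictSupport R (Set.Iic r))
  refine Module.Finite.of_surjective
    ((Ideal.Quotient.mkₐ R (Ideal.span (Set.range G))).toLinearMap ∘ₗ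
      (restrictSupport R (Set.Iic r)).subtype) fun y => ?_
  obtain ⟨p, rfl⟩ := Ideal.Quotient.mk_surjective y
  obtain ⟨b, hb, hpb⟩ := exists_mem_restrictSupport_sub_mem_span hG p
  exact ⟨⟨b, hb⟩, (Ideal.Quotient.eq.mpr hpb).symm⟩

variable (hG : ∀ i, G i - X i ^ (r i + 1) ∈ totalDegreeLT σ R (r i + 1))

/-- The global residue with respect to the `G i = X i ^ (r i + 1) + (lower degree)`: when `p` is
written, uniquely, as a combination of products `x ^ b * G ^ a` with `b ≤ r`, it is the coefficient
of `x ^ r * G ^ 0`. It is the dualizing form of the quotient by the `G i`. -/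
noncomputable def residueForm : MvPolynomial σ R →ₗ[R] R :=
  lcoeff R r ∘ₗ (LinearEquiv.ofBijective _ (bijective_replacePowers hG)).symm.toLinearMap

theorem residueForm_replacePowers (p : MvPolynomial σ R) :
    residueForm hG (replacePowers r G p) = coeff r p := by
  have h := (LinearEquiv.ofBijective _ (bijective_replacePowers hG)).symm_apply_apply p
  exact congrArg (coeff r) h

theorem residueForm_of_totalDegree_le {p : MvPolynomial σ R} (hp : p.totalDegree ≤ r.degree) :
    residueForm hG p = coeff r p := by
  obtain ⟨q, hq, rfl⟩ := exists_mem_filtration_apply_eq totalDegreeLT_monotone totalDegreeLT_zero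
    (replacePowers_sub_mem hG) (mem_totalDegreeLT_succ.mpr hp)
  rw [residueForm_replacePowers, eq_comm, ← sub_eq_zero, ← coeff_sub]
  exact coeff_eq_zero_of_mem_totalDegreeLT (replacePowers_sub_mem hG _ _ hq) le_rfl

theorem residueForm_generator_mul (i : σ) (p : MvPolynomial σ R) :
    residueForm hG (G i * p) = 0 := by
  obtain ⟨q, rfl⟩ := (bijective_replacePowers hG).surjective p
  rw [← replacePowers_X_pow_mul, residueForm_replacePowers, X_pow_eq_monomial,
    coeff_monomial_mul', if_neg]
  exact fun h => (Finsupp.single_le_iff.mp h).not_gt (r i).lt_succ_self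

theorem residueForm_mul_eq_zero {p : MvPolynomial σ R} (hp : p ∈ Ideal.span (Set.range G))
    (q : MvPolynomial σ R) : residueForm hG (p * q) = 0 := by
  induction hp using Submodule.span_induction generalizing q with
  | mem p hp => obtain ⟨i, rfl⟩ := hp; exact residueForm_generator_mul hG i q
  | zero => simp
  | add p p' _ _ hp hp' => rw [add_mul, map_add, hp, hp', add_zero]
  | smul a p _ hp => rw [smul_eq_mul, mul_comm a, mul_assoc, hp]

theorem exists_residueForm_mul_ne_zero {b : MvPolynomial σ R}
    (hb : b ∈ restrictSupport R (Set.Iic r)) (hb₀ : b ≠ 0) :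
    ∃ q, residueForm hG (b * q) ≠ 0 := by
  obtain ⟨m, hm, hmax⟩ := b.support.exists_max_image Finsupp.degree (support_nonempty.mpr hb₀)
  have hmr : m + (r - m) = r := add_tsub_cancel_of_le (hb hm)
  -- This factor moves the top-degree monomial `x ^ m` of `b` to `x ^ r`, and the product stays in
  -- the degrees where the residue is the plain coefficient of `x ^ r`.
  refine ⟨monomial (r - m) 1, ?_⟩
  have hdeg : (b * monomial (r - m) 1).totalDegree ≤ r.degree := by
    have hb_mem : b ∈ totalDegreeLT σ R (m.degree + 1) := fun k hk =>
      Nat.lt_succ_of_le (hmax k hk)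
    rw [← mem_totalDegreeLT_succ, ← congrArg Finsupp.degree hmr, map_add, add_right_comm]
    exact mul_mem_totalDegreeLT hb_mem (monomial_mem_totalDegreeLT _)
  rw [residueForm_of_totalDegree_le hG hdeg]
  nth_rw 1 [← hmr]
  simpa [coeff_mul_monomial] using hm

theorem mem_span_iff_residueForm_mul_eq_zero {p : MvPolynomial σ R} :
    p ∈ Ideal.span (Set.range G) ↔ ∀ q, residueForm hG (p * q) = 0 := by
  refine ⟨residueForm_mul_eq_zero hG, fun h => ?_⟩
  obtain ⟨b, hb, hpb⟩ := exists_mem_restrictSupport_sub_mem_span hG p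
  have hb₀ : b = 0 := by
    by_contra hb₀
    obtain ⟨q, hq⟩ := exists_residueForm_mul_ne_zero hG hb hb₀
    apply hq
    simpa [sub_mul, h q] using residueForm_mul_eq_zero hG hpb q
  simpa [hb₀] using hpb

end ReplacePowers

section Duality

variable {K A : Type*} [Field K] [CommRing A] [Algebra K A] {I : Ideal A}
  [Module.Finite K (A ⧸ I)] {τ : A →ₗ[K] K}

theorem exists_eq_form_mul (hτ : ∀ a, a ∈ I ↔ ∀ b, τ (a * b) = 0) {φ : A →ₗ[K] K}
    (hφ : ∀ a ∈ I, φ a = 0) : ∃ v, ∀ a, φ a = τ (v * a) := by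
  set W : Submodule K (Dual K A) := LinearMap.range ((LinearMap.mul K A).compr₂ τ)
  have mem_coann (a : A) : a ∈ W.dualCoannihilator ↔ a ∈ I := by
    simp only [W, Submodule.mem_dualCoannihilator, LinearMap.mem_range, forall_exists_index,
      forall_apply_eq_imp_iff, LinearMap.compr₂_apply, LinearMap.mul_apply', hτ, mul_comm a]
  have hW : W.dualCoannihilator = I.restrictScalars K := Submodule.ext mem_coann
  have : Module.Finite K (A ⧸ W.dualCoannihilator) := by
    rw [hW]
    exact Module.Finite.equiv (Submodule.Quotient.restrictScalarsEquiv K I).symm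
  have : FiniteDimensional K W := Subspace.finiteDimensional_quot_dualCoannihilator_iff.mp this
  have hφW : φ ∈ W := by
    rw [← Subspace.dualCoannihilator_dualAnnihilator_eq (W := W), Submodule.mem_dualAnnihilator]
    exact fun a ha => hφ a ((mem_coann a).mp ha)
  obtain ⟨v, rfl⟩ := hφW
  exact ⟨v, fun _ => rfl⟩

theorem exists_mul_mem_of_notMem (hτ : ∀ a, a ∈ I ↔ ∀ b, τ (a * b) = 0) {J : Ideal A}
    (hIJ : I ≤ J) {d : A} (hd : d ∉ J) : ∃ v, (∀ a ∈ J, v * a ∈ I) ∧ v * d ∉ I := by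
  obtain ⟨φ, hφd, hφJ⟩ := Submodule.exists_le_ker_of_notMem (p := J.restrictScalars K) hd
  obtain ⟨v, hv⟩ := exists_eq_form_mul hτ fun a ha => hφJ (hIJ ha)
  refine ⟨v, fun a ha => (hτ _).mpr fun b => ?_, fun hvd => hφd ?_⟩
  · rw [mul_assoc, ← hv]
    exact hφJ (J.mul_mem_right b ha)
  · simpa [hv] using (hτ _).mp hvd 1

end Duality

section VariableIdeal

attribute [local instance] MvPolynomial.gradedAlgebra

variable {σ R : Type*} [CommRing R]

theorem X_pow_mem_idealOfVars_pow (i : σ) (n : ℕ) :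
    (X i : MvPolynomial σ R) ^ n ∈ idealOfVars σ R ^ n :=
  Ideal.pow_mem_pow (Ideal.subset_span (Set.mem_range_self i)) n

theorem sub_C_constantCoeff_mem_idealOfVars (p : MvPolynomial σ R) :
    p - C (constantCoeff p) ∈ idealOfVars σ R := by
  rw [← pow_one (idealOfVars σ R), mem_pow_idealOfVars_iff']
  intro m hm
  have hm₀ : m = 0 := m.degree_eq_zero_iff.mp (Nat.lt_one_iff.mp hm)
  simp [hm₀, constantCoeff_eq]

theorem mul_mem_of_mem_idealOfVars {I : Ideal (MvPolynomial σ R)} {d p : MvPolynomial σ R}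
    (hd : ∀ i, d * X i ∈ I) (hp : p ∈ idealOfVars σ R) : d * p ∈ I := by
  rw [idealOfVars] at hp
  induction hp using Submodule.span_induction with
  | mem _ hx => obtain ⟨i, rfl⟩ := hx; exact hd i
  | zero => simp
  | add p q _ _ hp hq => rw [mul_add]; exact add_mem hp hq
  | smul a p _ hp => rw [smul_eq_mul, mul_left_comm]; exact I.mul_mem_left a hp

theorem mem_of_mem_sup_idealOfVars_pow {I : Ideal (MvPolynomial σ R)}
    (hI : I.IsHomogeneous (homogeneousSubmodule σ R)) {p : MvPolynomial σ R} {n : ℕ}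
    (hn : p.totalDegree < n) (hp : p ∈ I ⊔ idealOfVars σ R ^ n) : p ∈ I := by
  obtain ⟨g, hg, z, hz, rfl⟩ := Submodule.mem_sup.mp hp
  have hz_eq (k : ℕ) (hk : k < n) : homogeneousComponent k z = 0 :=
    homogeneousComponent_eq_zero' _ _ fun m hm =>
      (lt_of_lt_of_le hk ((mem_pow_idealOfVars_iff n z).mp hz m hm)).ne'
  refine (mem_iff_homogeneousComponent_mem hI _).mpr fun k => ?_
  rcases lt_or_ge k n with hk | hk
  · rw [map_add, hz_eq k hk, add_zero]
    exact homogeneousComponent_mem_of_mem hI hg k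
  · rw [homogeneousComponent_eq_zero _ _ (hn.trans_le hk)]
    exact I.zero_mem

theorem mem_of_mul_mem_sup_idealOfVars_pow {I : Ideal (MvPolynomial σ R)}
    (hI : I.IsHomogeneous (homogeneousSubmodule σ R)) {p v : MvPolynomial σ R} {n : ℕ}
    (hp : p.IsHomogeneous n) (hv : IsUnit (constantCoeff v))
    (hvp : v * p ∈ I ⊔ idealOfVars σ R ^ (n + 1)) : p ∈ I := by
  have hp_mem : p ∈ idealOfVars σ R ^ n :=
    (mem_pow_idealOfVars_iff n p).mpr fun m hm =>
      (hp.degree_eq_sum_deg_support hm).le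
  have hdiff : (v - C (constantCoeff v)) * p ∈ I ⊔ idealOfVars σ R ^ (n + 1) := by
    rw [pow_succ']
    exact Ideal.mem_sup_right
      (Ideal.mul_mem_mul (sub_C_constantCoeff_mem_idealOfVars v) hp_mem)
  have hconst : C (constantCoeff v) * p ∈ I ⊔ idealOfVars σ R ^ (n + 1) := by
    simpa [sub_mul] using sub_mem hvp hdiff
  have hdeg : (C (constantCoeff v) * p).totalDegree < n + 1 := by
    rw [← smul_eq_C_mul]
    exact Nat.lt_succ_of_le ((totalDegree_smul_le _ p).trans hp.totalDegree_le)
  exact (I.unit_mul_mem_iff_mem (hv.map C)).mp (mem_of_mem_sup_idealOfVars_pow hI hdeg hconst)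

theorem X_notMem_radical_span_of_aeval_eq_zero {L ι : Type*} [CommRing L] [IsReduced L]
    [Algebra R L] {F : ι → MvPolynomial σ R} {p : σ → L} (hpF : ∀ i, aeval p (F i) = 0) {j : σ}
    (hj : p j ≠ 0) : X j ∉ (Ideal.span (Set.range F)).radical := by
  rintro ⟨k, hk⟩
  have hle : Ideal.span (Set.range F) ≤ RingHom.ker (aeval p : MvPolynomial σ R →ₐ[R] L) := by
    refine Ideal.span_le.mpr ?_
    rintro _ ⟨i, rfl⟩
    exact hpF i
  have hpk : aeval p (X j ^ k : MvPolynomial σ R) = 0 := hle hk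
  rw [map_pow, aeval_X] at hpk
  exact hj (eq_zero_of_pow_eq_zero hpk)

end VariableIdeal

section Matrix

variable {n R : Type*} [Fintype n] [DecidableEq n] [CommRing R] {I : Ideal R}

theorem det_mul_mem_of_mulVec_mem {M : Matrix n n R} {x : n → R} (h : ∀ i, M.mulVec x i ∈ I)
    (j : n) : M.det * x j ∈ I := by
  have hcramer : M.adjugate.mulVec (M.mulVec x) = M.det • x := by
    rw [Matrix.mulVec_mulVec, Matrix.adjugate_mul, Matrix.smul_mulVec, Matrix.one_mulVec]
  rw [← smul_eq_mul, ← Pi.smul_apply, ← hcramer]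
  exact I.sum_mem fun i _ => I.mul_mem_left _ (h i)

theorem det_add_diagonal_sub_det_mem (M : Matrix n n R) {y : n → R} (hy : ∀ i, y i ∈ I) :
    (M + Matrix.diagonal y).det - M.det ∈ I := by
  have hy₀ : (Ideal.Quotient.mk I).mapMatrix (Matrix.diagonal y) = 0 := by
    rw [RingHom.mapMatrix_apply, Matrix.diagonal_map (map_zero _), Matrix.diagonal_eq_zero]
    exact funext fun i => Ideal.Quotient.eq_zero_iff_mem.mpr (hy i)
  rw [← Ideal.Quotient.eq, RingHom.map_det, RingHom.map_det, map_add, hy₀, add_zero]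

end Matrix

section Determinant

attribute [local instance] MvPolynomial.gradedAlgebra

variable {σ K : Type*} [Field K]

theorem exists_constantCoeff_ne_zero_of_mul_X_mem {r : σ →₀ ℕ} {G : σ → MvPolynomial σ K}
    (hG : ∀ i, G i - X i ^ (r i + 1) ∈ totalDegreeLT σ K (r i + 1))
    {J : Ideal (MvPolynomial σ K)} (hJ : Ideal.span (Set.range G) ≤ J) {d : MvPolynomial σ K}
    (hd : ∀ i, d * X i ∈ Ideal.span (Set.range G)) (hdJ : d ∉ J) :
    ∃ v, constantCoeff v ≠ 0 ∧ ∀ a ∈ J, v * a ∈ Ideal.span (Set.range G) := by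
  have := finite_quotient_span hG
  obtain ⟨v, hvJ, hvd⟩ :=
    exists_mul_mem_of_notMem (fun _ => mem_span_iff_residueForm_mul_eq_zero hG) hJ hdJ
  refine ⟨v, fun hv₀ => hvd ?_, hvJ⟩
  rw [mul_comm]
  refine mul_mem_of_mem_idealOfVars hd ?_
  simpa [hv₀] using sub_C_constantCoeff_mem_idealOfVars v

variable [Fintype σ] [DecidableEq σ] {F : σ → MvPolynomial σ K}
  {A : Matrix σ σ (MvPolynomial σ K)}

theorem det_mem_span_sup_idealOfVars_pow
    (hI : (Ideal.span (Set.range F)).IsHomogeneous (homogeneousSubmodule σ K))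
    (hAF : A.mulVec X = F) {r : ℕ} (hFr : ∀ i, (F i).totalDegree ≤ r) {j : σ}
    (hj : X j ^ r ∉ Ideal.span (Set.range F)) :
    A.det ∈ Ideal.span (Set.range F) ⊔ idealOfVars σ K ^ r := by
  set I := Ideal.span (Set.range F)
  set G : σ → MvPolynomial σ K := fun i => X i ^ (r + 1) + F i
  set B := A + Matrix.diagonal fun i => (X i : MvPolynomial σ K) ^ r
  have hG (i : σ) : G i - X i ^ (r + 1) ∈ totalDegreeLT σ K (r + 1) := by
    simpa [G, mem_totalDegreeLT_succ] using hFr i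
  have hGI : Ideal.span (Set.range G) ≤ I ⊔ idealOfVars σ K ^ (r + 1) := by
    refine Ideal.span_le.mpr ?_
    rintro _ ⟨i, rfl⟩
    exact add_mem (Ideal.mem_sup_right (X_pow_mem_idealOfVars_pow i _))
      (Ideal.mem_sup_left (Ideal.subset_span ⟨i, rfl⟩))
  have hBX : B.mulVec X = G := by
    funext i
    simp [B, G, Matrix.add_mulVec, hAF, Matrix.mulVec_diagonal, pow_succ, add_comm]
  have hB_socle := det_mul_mem_of_mulVec_mem (I := Ideal.span (Set.range G)) (M := B) (x := X)
    fun i => hBX ▸ Ideal.subset_span (Set.mem_range_self i)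
  have hB : B.det ∈ I ⊔ idealOfVars σ K ^ r := by
    by_contra hB
    obtain ⟨v, hv₀, hv⟩ := exists_constantCoeff_ne_zero_of_mul_X_mem
      (r := Finsupp.equivFunOnFinite.symm fun _ => r) hG
      (hGI.trans (sup_le_sup_left (Ideal.pow_le_pow_right r.le_succ) I)) hB_socle hB
    exact hj (mem_of_mul_mem_sup_idealOfVars_pow hI (isHomogeneous_X_pow j r) hv₀.isUnit
      (hGI (hv _ (Ideal.mem_sup_right (X_pow_mem_idealOfVars_pow j r)))))
  have hBA : B.det - A.det ∈ I ⊔ idealOfVars σ K ^ r :=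
    det_add_diagonal_sub_det_mem A fun i => Ideal.mem_sup_right (X_pow_mem_idealOfVars_pow i r)
  simpa using sub_mem hB hBA

theorem det_mem_span_of_mulVec_X_eq
    (hI : (Ideal.span (Set.range F)).IsHomogeneous (homogeneousSubmodule σ K))
    (hAF : A.mulVec X = F) {j : σ} (hj : X j ∉ (Ideal.span (Set.range F)).radical) :
    A.det ∈ Ideal.span (Set.range F) := by
  set r := (Finset.univ.sup fun i => (F i).totalDegree) + A.det.totalDegree + 1
  have hFr (i : σ) : (F i).totalDegree ≤ r := by
    have := Finset.le_sup (f := fun i => (F i).totalDegree) (Finset.mem_univ i)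
    omega
  exact mem_of_mem_sup_idealOfVars_pow hI (by omega)
    (det_mem_span_sup_idealOfVars_pow hI hAF hFr fun h => hj ⟨r, h⟩)

theorem hessian_mem_jacobian_of_isolated_singularities_general
    {L : Type*} [CommRing L] [IsReduced L] [Algebra K L] {f : MvPolynomial σ K} {d : ℕ}
    (hf : f.IsHomogeneous d) {p : σ → L} (hp : p ≠ 0) (hpf : ∀ i, aeval p (pderiv i f) = 0) :
    (Matrix.of fun i j => pderiv i (pderiv j f)).det ∈
      Ideal.span (Set.range fun i => pderiv i f) := by
  obtain ⟨j, hj⟩ := Function.ne_iff.mp hp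
  set H : Matrix σ σ (MvPolynomial σ K) := Matrix.of fun i j => pderiv i (pderiv j f)
  set F : σ → MvPolynomial σ K := fun i => (d - 1) • pderiv i f
  have hEuler : H.transpose.mulVec X = F := by
    funext i
    have hi : ∑ j, X j * pderiv j (pderiv i f) = F i := hf.pderiv.sum_X_mul_pderiv
    simpa [H, Matrix.mulVec, dotProduct, mul_comm] using hi
  have hF_le : Ideal.span (Set.range F) ≤ Ideal.span (Set.range fun i => pderiv i f) := by
    refine Ideal.span_le.mpr ?_
    rintro _ ⟨i, rfl⟩
    exact nsmul_mem (Ideal.subset_span (Set.mem_range_self i)) _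
  have hI : (Ideal.span (Set.range F)).IsHomogeneous (homogeneousSubmodule σ K) := by
    refine Ideal.homogeneous_span _ _ ?_
    rintro _ ⟨i, rfl⟩
    exact ⟨d - 1, nsmul_mem (hf.pderiv (i := i)) _⟩
  rw [← Matrix.det_transpose]
  refine hF_le (det_mem_span_of_mulVec_X_eq hI hEuler
    (X_notMem_radical_span_of_aeval_eq_zero (fun i => ?_) hj))
  rw [map_nsmul, hpf, smul_zero]

end Determinant

/-- **Proposition.** If `f` is a reduced homogeneous polynomial whose hypersurface
`V(f) ⊂ ℙ^n` is singular but has only isolated singularities (the singular locus is a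
nonempty finite set of points of `ℙ^n`), then the Hessian determinant of `f` belongs to
the Jacobian ideal `J(f)`. -/
theorem hessian_mem_jacobian_of_isolated_singularities
    {n d : ℕ} (f : MvPolynomial (Fin (n + 1)) ℂ)
    (hf : f.IsHomogeneous d) (hred : Squarefree f)
    (hsing : (singularLines f).Nonempty)
    (hfin : (singularLines f).Finite) :
    hessDet f ∈ jacobianIdeal f := by
  obtain ⟨-, p, hp, -, hpf⟩ := hsing
  exact hessian_mem_jacobian_of_isolated_singularities_general hf hp hpf
end

section
/- Let f ∈ ℂ[x_0,x_1,x_2,x_3]_3 be a homogeneous cubic such that the surface V(f) ⊂ ℙ^3 is smooth. Then the Milnor algebra M(f) = R/J(f) has the Strong Lefschetz Property. -/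
/-!
The Milnor algebra is `A = ℂ[x] ⧸ (q)` for four quadrics `q` without common zero, so some matrix
`M` of forms takes `q` to powers of the variables. By Cramer's rule, `g ∈ (q)` exactly when
`det M * g` lies in the ideal of these powers; hence `A` inherits a nondegenerate functional `Λ`
from a monomial complete intersection, and syzygies of `q` have entries in `(q)`.

By duality it suffices to find a linear form `ℓ` with `ℓ ^ 4 ≠ 0` and `ℓ ^ 2` injective on `A_1`.
If `ℓ ^ 2` is never injective, the Hessian of the quartic form `Λ (ℓ ^ 4)` is degenerate, and its
kernel contains a nonzero polynomial vector field; its value at `ℓ` is a linear form `s` such that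
`ℓ ^ 2 * s = 0` identically. As in Gordan and Noether's study of forms with vanishing Hessian,
differentiating along `ℓ` gives `ℓ * s ^ 2 = 0` and `s ^ 3 = 0`, and in dimension four a count of
dimensions improves this to `s ^ 2 = 0`. Differentiating once more, the derivatives of `s`
annihilate `s`. If `s ^ 2 = 0` and `s * t = 0`, then `t * s ^ 2 = s * (s * t)` is a linear syzygy of
`q`, so `t` is a multiple of `s`; for the derivatives `t` of `s` this yields first `ℓ * s = 0`, then
`A_1 * s = 0`, and finally `s = 0`.
-/

open MvPolynomial Module

/-- The degree-`m` graded piece of the quotient `R ⧸ I`, namely the image of the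
space of homogeneous polynomials of degree `m`. -/
noncomputable def gradedPiece {N : ℕ} (I : Ideal (MvPolynomial (Fin N) ℂ)) (m : ℕ) :
    Submodule ℂ (MvPolynomial (Fin N) ℂ ⧸ I) :=
  Submodule.map (Ideal.Quotient.mkₐ ℂ I).toLinearMap (homogeneousSubmodule (Fin N) ℂ m)

/-- The Strong Lefschetz Property for the graded quotient algebra `R ⧸ I` with top
(socle) degree `T`: there is a linear form `ℓ` such that for all `i, k` with
`i + k ≤ T`, multiplication by `ℓ^k` from the degree-`i` piece to the degree-`(i+k)`
piece is injective or surjective. -/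
def hasSLPQuot {N : ℕ} (I : Ideal (MvPolynomial (Fin N) ℂ)) (T : ℕ) : Prop :=
  ∃ ℓ ∈ homogeneousSubmodule (Fin N) ℂ 1,
    ∀ i k : ℕ, i + k ≤ T →
      (∀ v ∈ gradedPiece I i, (Ideal.Quotient.mk I ℓ) ^ k * v = 0 → v = 0) ∨
      (∀ w ∈ gradedPiece I (i + k), ∃ v ∈ gradedPiece I i,
        (Ideal.Quotient.mk I ℓ) ^ k * v = w)

section RegularFamily

universe u

variable {ι : Type*} {R : Type u} [CommRing R] {n : ℕ}

/-- A family in a commutative ring which is a regular sequence in whatever order it is listed: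
each member is a nonzerodivisor modulo the ideal generated by any of the others. -/
def IsRegularFamily (y : ι → R) : Prop :=
  ∀ (s : Set ι) (i : ι), i ∉ s → IsSMulRegular (R ⧸ Ideal.span (y '' s)) (y i)

theorem isSMulRegular_quotient_iff_mem_of_mul_mem {I : Ideal R} {a : R} :
    IsSMulRegular (R ⧸ I) a ↔ ∀ g, a * g ∈ I → g ∈ I :=
  isSMulRegular_quotient_iff_mem_of_smul_mem I a

-- McCoy's theorem modulo `I`.
theorem isSMulRegular_quotient_map_C {I : Ideal R} {p : Polynomial R}
    (hp : ∀ c, (∀ j, p.coeff j * c ∈ I) → c ∈ I) :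
    IsSMulRegular (Polynomial R ⧸ I.map Polynomial.C) p := by
  have mem_iff (f : Polynomial R) : f ∈ I.map Polynomial.C ↔ f.map (Ideal.Quotient.mk I) = 0 := by
    simp [Ideal.mem_map_C_iff, Polynomial.ext_iff, Ideal.Quotient.eq_zero_iff_mem]
  have hreg : p.map (Ideal.Quotient.mk I) ∈ nonZeroDivisors (Polynomial (R ⧸ I)) := by
    refine Polynomial.mem_nonZeroDivisors_iff.mpr fun a ha => ?_
    obtain ⟨c, rfl⟩ := Ideal.Quotient.mk_surjective a
    refine Ideal.Quotient.eq_zero_iff_mem.mpr (hp c fun j => ?_)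
    rw [← Ideal.Quotient.eq_zero_iff_mem, map_mul, mul_comm]
    simpa using congrArg (Polynomial.coeff · j) ha
  refine isSMulRegular_quotient_iff_mem_of_mul_mem.mpr fun g hg => ?_
  rw [mem_iff, Polynomial.map_mul] at hg
  exact (mem_iff g).mpr (mem_nonZeroDivisors_iff_left.mp hreg _ hg)

theorem isSMulRegular_quotient_sup_span_singleton {I : Ideal R} {a b : R}
    (ha : IsSMulRegular (R ⧸ I) a) (hb : IsSMulRegular (R ⧸ I ⊔ Ideal.span {a}) b) :
    IsSMulRegular (R ⧸ I ⊔ Ideal.span {b}) a := by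
  rw [isSMulRegular_quotient_iff_mem_of_mul_mem] at *
  intro g hg
  obtain ⟨c, hc, w, hw, hcw⟩ := Submodule.mem_sup.mp hg
  obtain ⟨w, rfl⟩ := Ideal.mem_span_singleton'.mp hw
  have hbw : b * w ∈ I ⊔ Ideal.span {a} := by
    rw [show b * w = -c + g * a by linear_combination hcw]
    exact Submodule.add_mem_sup (neg_mem hc) (Ideal.mem_span_singleton'.mpr ⟨g, rfl⟩)
  obtain ⟨d, hd, v, hv, hdv⟩ := Submodule.mem_sup.mp (hb w hbw)
  obtain ⟨v, rfl⟩ := Ideal.mem_span_singleton'.mp hv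
  have hg' : g - v * b ∈ I := by
    refine ha _ ?_
    rw [show a * (g - v * b) = c + b * d by linear_combination -hcw - b * hdv]
    exact add_mem hc (I.mul_mem_left b hd)
  exact Submodule.mem_sup.mpr ⟨_, hg', v * b, Ideal.mem_span_singleton'.mpr ⟨v, rfl⟩, by ring⟩

theorem image_update_of_notMem [DecidableEq ι] {β : Type*} (y : ι → β) {k : ι} (z : β) {s : Set ι}
    (hk : k ∉ s) : Function.update y k z '' s = y '' s :=
  Set.image_congr fun _ hj => Function.update_of_ne (ne_of_mem_of_not_mem hj hk) _ _

theorem span_image_update_insert [DecidableEq ι] (y : ι → R) {k : ι} (z : R) {s : Set ι}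
    (hk : k ∉ s) :
    Ideal.span (Function.update y k z '' insert k s) =
      Ideal.span (y '' s) ⊔ Ideal.span {z} := by
  rw [Set.image_insert_eq, Function.update_self, image_update_of_notMem y z hk, Ideal.span_insert,
    sup_comm]

namespace IsRegularFamily

variable {y : ι → R}

theorem map_C (hy : IsRegularFamily y) :
    IsRegularFamily fun i => (Polynomial.C (y i) : Polynomial R) := by
  intro s i hi
  rw [← Set.image_image, ← Ideal.map_span]
  refine isSMulRegular_quotient_map_C fun c hc => ?_
  exact isSMulRegular_quotient_iff_mem_of_mul_mem.mp (hy s i hi) c (by simpa using hc 0)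

theorem update [DecidableEq ι] (hy : IsRegularFamily y) {k : ι} {z : R}
    (hz : ∀ s : Set ι, k ∉ s → IsSMulRegular (R ⧸ Ideal.span (y '' s)) z) :
    IsRegularFamily (Function.update y k z) := by
  intro s i hi
  rcases eq_or_ne i k with rfl | hik
  · rw [image_update_of_notMem y z hi, Function.update_self]
    exact hz s hi
  rw [Function.update_of_ne hik]
  by_cases hk : k ∈ s
  · obtain ⟨hks, his⟩ : k ∉ s \ {k} ∧ i ∉ s \ {k} := by simp [hi]
    rw [← Set.insert_sdiff_self_of_mem hk, span_image_update_insert y z hks]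
    refine isSMulRegular_quotient_sup_span_singleton (hy _ i his) ?_
    rw [sup_comm, ← Ideal.span_insert, ← Set.image_insert_eq]
    exact hz _ (by simp [hik.symm])
  · rw [image_update_of_notMem y z hk]
    exact hy s i hi

end IsRegularFamily

/-- A row of coefficients for a generic linear combination, with a parameter that is a polynomial
variable. Setting the variable to `0` turns it into the `k`-th standard basis vector. -/
noncomputable def genericRow (R : Type u) [CommRing R] (k : Fin n) : Fin n → Polynomial R :=
  fun j => Polynomial.C (Pi.single (M := fun _ => R) k 1 j) + Polynomial.X ^ (j.val + 1)

theorem eval_zero_genericRow (k j : Fin n) :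
    (genericRow R k j).eval 0 = Pi.single (M := fun _ => R) k 1 j := by
  simp [genericRow]

theorem coeff_genericRow_dotProduct (k : Fin n) (q : Fin n → R) (j : Fin n) :
    (genericRow R k ⬝ᵥ fun i => Polynomial.C (q i)).coeff (j.val + 1) = q j := by
  simp [genericRow, dotProduct, add_mul, Polynomial.coeff_X_pow, Fin.val_inj]

theorem isSMulRegular_genericRow_dotProduct {I : Ideal R} {q : Fin n → R} {a : R}
    (ha : IsSMulRegular (R ⧸ I) a) (haq : a ∈ Ideal.span (Set.range q)) (k : Fin n) :
    IsSMulRegular (Polynomial R ⧸ I.map Polynomial.C)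
      (genericRow R k ⬝ᵥ fun i => Polynomial.C (q i)) := by
  refine isSMulRegular_quotient_map_C fun c hc => ?_
  refine isSMulRegular_quotient_iff_mem_of_mul_mem.mp ha c ?_
  obtain ⟨b, rfl⟩ := Ideal.mem_span_range_iff_exists_fun.mp haq
  rw [Finset.sum_mul]
  refine Ideal.sum_mem _ fun j _ => ?_
  rw [mul_assoc, ← coeff_genericRow_dotProduct k q j]
  exact I.mul_mem_left _ (hc _)

theorem det_mul_mem_of_mulVec_mem_s4 [Fintype ι] [DecidableEq ι] {I : Ideal R} (M : Matrix ι ι R)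
    {q : ι → R} (h : ∀ i, (M.mulVec q) i ∈ I) {g : R} (hg : g ∈ Ideal.span (Set.range q)) :
    M.det * g ∈ I := by
  obtain ⟨c, rfl⟩ := Ideal.mem_span_range_iff_exists_fun.mp hg
  have cramer : M.adjugate.mulVec (M.mulVec q) = M.det • q := by
    rw [Matrix.mulVec_mulVec, Matrix.adjugate_mul, Matrix.smul_mulVec, Matrix.one_mulVec]
  have hq (j : ι) : M.det * q j ∈ I := by
    rw [← smul_eq_mul, ← Pi.smul_apply, ← cramer]
    exact Ideal.sum_mem _ fun i _ => I.mul_mem_left _ (h i)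
  rw [Finset.mul_sum]
  exact Ideal.sum_mem _ fun j _ => by simpa only [mul_left_comm] using I.mul_mem_left (c j) (hq j)

theorem mulVec_mem_span_range [Fintype ι] {κ : Type*} (M : Matrix κ ι R) (q : ι → R) (i : κ) :
    (M.mulVec q) i ∈ Ideal.span (Set.range q) :=
  Ideal.mem_span_range_iff_exists_fun.mpr ⟨M i, rfl⟩

theorem updateRow_mulVec [Fintype ι] [DecidableEq ι] (M : Matrix ι ι R) (k : ι) (e q : ι → R) :
    (M.updateRow k e).mulVec q = Function.update (M.mulVec q) k (e ⬝ᵥ q) := by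
  ext i
  rcases eq_or_ne i k with rfl | hi
  · simp [Matrix.mulVec]
  · simp [Matrix.mulVec, hi]

-- The matrix `N` below has determinant `z * det M - y k * det T`, where `T` is `M` with row `k`
-- replaced by `e`, and `N *ᵥ q` vanishes in position `k`.
theorem det_updateRow_mul_mem [Fintype ι] [DecidableEq ι] {M : Matrix ι ι R} {q y : ι → R} {k : ι}
    (hM : M.mulVec q = y) (hk : IsSMulRegular (R ⧸ Ideal.span (y '' {k}ᶜ)) (y k)) (e : ι → R)
    {g : R} (hg : M.det * g ∈ Ideal.span (Set.range y)) :
    (M.updateRow k e).det * g ∈ Ideal.span (Set.range (Function.update y k (e ⬝ᵥ q))) := by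
  set I := Ideal.span (y '' {k}ᶜ) with hI
  set z := e ⬝ᵥ q with hz
  have range_eq (w : R) : Ideal.span (Set.range (Function.update y k w)) = I ⊔ Ideal.span {w} := by
    rw [← Set.insert_image_compl_eq_range _ k, ← Set.image_insert_eq]
    exact span_image_update_insert y w (by simp)
  have mem_of_mul_mem := isSMulRegular_quotient_iff_mem_of_mul_mem.mp hk
  let N := M.updateRow k (z • M k + (-y k) • e)
  have det_N : N.det = z * M.det - y k * (M.updateRow k e).det := by
    simp only [N, Matrix.det_updateRow_add, Matrix.det_updateRow_smul, Matrix.updateRow_eq_self]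
    ring
  have N_mulVec (i : ι) : (N.mulVec q) i ∈ I := by
    rw [updateRow_mulVec, hM]
    rcases eq_or_ne i k with rfl | hi
    · have : M i ⬝ᵥ q = y i := congrFun hM i
      simp [this, ← hz, mul_comm]
    · rw [Function.update_of_ne hi]
      exact Ideal.subset_span ⟨i, hi, rfl⟩
  have det_N_mem : N.det ∈ I := by
    refine mem_of_mul_mem _ ?_
    rw [mul_comm]
    exact det_mul_mem_of_mulVec_mem_s4 N N_mulVec (hM ▸ mulVec_mem_span_range M q k)
  rw [← Function.update_eq_self k y, range_eq] at hg
  obtain ⟨b, hb, _, ha, hab⟩ := Submodule.mem_sup.mp hg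
  obtain ⟨h, rfl⟩ := Ideal.mem_span_singleton'.mp ha
  have key : (M.updateRow k e).det * g - h * z ∈ I := by
    refine mem_of_mul_mem _ ?_
    rw [show y k * ((M.updateRow k e).det * g - h * z) = z * b - g * N.det by
      rw [det_N]; linear_combination -z * hab]
    exact sub_mem (I.mul_mem_left _ hb) (I.mul_mem_left _ det_N_mem)
  rw [range_eq]
  exact Submodule.mem_sup.mpr ⟨_, key, h * z, Ideal.mem_span_singleton'.mpr ⟨h, rfl⟩, by ring⟩

namespace IsRegularFamily

-- One row at a time, the coefficient matrix is replaced by a generic one over a larger ring, so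
-- that the entries of `M' *ᵥ q` stay regular; `σ` specializes the generic rows to unit vectors.
theorem exists_generic_rows {M : Matrix (Fin n) (Fin n) R} {q : Fin n → R}
    (hy : IsRegularFamily (M.mulVec q)) {g : R}
    (hg : M.det * g ∈ Ideal.span (Set.range (M.mulVec q))) (s : Finset (Fin n)) :
    ∃ (S : Type u) (_ : CommRing S) (φ : R →+* S) (σ : S →+* R) (M' : Matrix (Fin n) (Fin n) S),
      (∀ r, σ (φ r) = r) ∧ (∀ i ∈ s, ∀ j, σ (M' i j) = Pi.single (M := fun _ => R) i 1 j) ∧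
      IsRegularFamily (M'.mulVec (φ ∘ q)) ∧
      M'.det * φ g ∈ Ideal.span (Set.range (M'.mulVec (φ ∘ q))) := by
  induction s using Finset.induction_on with
  | empty => exact ⟨R, _, RingHom.id R, RingHom.id R, M, fun _ => rfl, by simp, hy, hg⟩
  | insert k s hk ih =>
    obtain ⟨S, _, φ, σ, M', hσ, hrow, hreg, hdet⟩ := ih
    have mulVec_C : (M'.map Polynomial.C).mulVec ((Polynomial.C.comp φ) ∘ q) =
        fun i => Polynomial.C ((M'.mulVec (φ ∘ q)) i) := by
      ext1 i
      simp [Matrix.mulVec, dotProduct]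
    have span_C (t : Set (Fin n)) :
        Ideal.span ((fun i => (Polynomial.C ((M'.mulVec (φ ∘ q)) i) : Polynomial S)) '' t) =
          (Ideal.span (M'.mulVec (φ ∘ q) '' t)).map Polynomial.C := by
      rw [Ideal.map_span, Set.image_image]
    have hk' := hreg.map_C {k}ᶜ k (by simp)
    refine ⟨Polynomial S, _, Polynomial.C.comp φ, σ.comp (Polynomial.evalRingHom 0),
      (M'.map Polynomial.C).updateRow k (genericRow S k), by simp [hσ], fun i hi j => ?_, ?_, ?_⟩
    · rcases eq_or_ne i k with rfl | hik
      · simp [eval_zero_genericRow, Pi.single_apply, apply_ite σ]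
      · simpa [hik] using hrow i (Finset.mem_of_mem_insert_of_ne hi hik) j
    · rw [updateRow_mulVec, mulVec_C]
      refine hreg.map_C.update fun t ht => ?_
      rw [span_C]
      exact isSMulRegular_genericRow_dotProduct (hreg t k ht) (mulVec_mem_span_range _ _ _) k
    · rw [updateRow_mulVec, mulVec_C]
      refine det_updateRow_mul_mem mulVec_C hk' _ ?_
      rw [← Set.image_univ, span_C, Set.image_univ, ← RingHom.mapMatrix_apply, ← RingHom.map_det,
        RingHom.comp_apply, ← map_mul]
      exact Ideal.mem_map_of_mem _ hdet

theorem det_mul_mem_iff {M : Matrix (Fin n) (Fin n) R} {q : Fin n → R}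
    (hy : IsRegularFamily (M.mulVec q)) {g : R} :
    M.det * g ∈ Ideal.span (Set.range (M.mulVec q)) ↔ g ∈ Ideal.span (Set.range q) := by
  refine ⟨fun hg => ?_,
    det_mul_mem_of_mulVec_mem_s4 M fun i => Ideal.subset_span (Set.mem_range_self i)⟩
  obtain ⟨S, _, φ, σ, M', hσ, hrow, -, hdet⟩ := hy.exists_generic_rows hg Finset.univ
  have map_M' : σ.mapMatrix M' = 1 := by
    ext i j
    simp [hrow, Matrix.one_apply, Pi.single_apply, eq_comm]
  have map_mulVec : σ ∘ M'.mulVec (φ ∘ q) = q := by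
    ext1 i
    simp [Matrix.mulVec, dotProduct, hrow, hσ, Pi.single_apply]
  have := Ideal.mem_map_of_mem σ hdet
  rwa [map_mul, hσ, RingHom.map_det, map_M', Matrix.det_one, one_mul, Ideal.map_span,
    ← Set.range_comp, map_mulVec] at this

-- By Cramer's rule `det M • s` is a combination of the determinants of `M` with one row replaced
-- by `s`; such a matrix sends `q` to `M *ᵥ q` with one entry replaced by `0`.
theorem syzygy_mem {M : Matrix (Fin n) (Fin n) R} {q : Fin n → R}
    (hy : IsRegularFamily (M.mulVec q)) {s : Fin n → R} (hs : s ⬝ᵥ q = 0) (j : Fin n) :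
    s j ∈ Ideal.span (Set.range q) := by
  have det_updateRow_mem (k : Fin n) :
      (M.updateRow k s).det ∈ Ideal.span (M.mulVec q '' {k}ᶜ) := by
    refine isSMulRegular_quotient_iff_mem_of_mul_mem.mp (hy {k}ᶜ k (by simp)) _ ?_
    rw [mul_comm]
    refine det_mul_mem_of_mulVec_mem_s4 _ (fun i => ?_) (mulVec_mem_span_range M q k)
    rw [updateRow_mulVec, hs]
    rcases eq_or_ne i k with rfl | hi
    · rw [Function.update_self]
      exact zero_mem _
    · rw [Function.update_of_ne hi]
      exact Ideal.subset_span ⟨i, hi, rfl⟩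
  have cramer : M.transpose.mulVec (M.transpose.cramer s) = M.det • s := by
    rw [Matrix.mulVec_cramer, Matrix.det_transpose]
  refine hy.det_mul_mem_iff.mp ?_
  rw [← smul_eq_mul, ← Pi.smul_apply, ← cramer, Matrix.mulVec, dotProduct]
  refine Ideal.sum_mem _ fun k _ => Ideal.mul_mem_left _ _ ?_
  rw [Matrix.cramer_transpose_apply]
  exact Ideal.span_mono (Set.image_subset_range _ _) (det_updateRow_mem k)

end IsRegularFamily

end RegularFamily

section Forms

variable {σ ι R : Type*} [CommRing R] {d m : ℕ}

theorem homogeneousComponent_mul_of_isHomogeneous (h : MvPolynomial σ R) {q : MvPolynomial σ R}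
    (hq : q.IsHomogeneous m) :
    homogeneousComponent (d + m) (h * q) = homogeneousComponent d h * q := by
  let _ := gradedAlgebra (σ := σ) (R := R)
  rw [← decomposition.decompose'_apply, ← decomposition.decompose'_apply]
  exact DirectSum.coe_decompose_mul_add_of_right_mem (homogeneousSubmodule σ R) hq

theorem homogeneousComponent_mul_eq_zero (h : MvPolynomial σ R) {q : MvPolynomial σ R}
    (hq : q.IsHomogeneous m) (hd : d < m) : homogeneousComponent d (h * q) = 0 := by
  let _ := gradedAlgebra (σ := σ) (R := R)
  rw [← decomposition.decompose'_apply]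
  exact DirectSum.coe_decompose_mul_of_right_mem_of_not_le (homogeneousSubmodule σ R) hq hd.not_ge

theorem eq_zero_of_mem_span_of_degree_lt [Finite ι] {q : ι → MvPolynomial σ R}
    (hq : ∀ j, (q j).IsHomogeneous m) (hd : d < m) {p : MvPolynomial σ R} (hp : p.IsHomogeneous d)
    (hpq : p ∈ Ideal.span (Set.range q)) : p = 0 := by
  cases nonempty_fintype ι
  obtain ⟨h, hh⟩ := Ideal.mem_span_range_iff_exists_fun.mp hpq
  rw [← homogeneousComponent_eq_self hp, ← hh, map_sum]
  exact Finset.sum_eq_zero fun j _ => homogeneousComponent_mul_eq_zero _ (hq j) hd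

theorem exists_homogeneous_coeffs [Fintype ι] {q : ι → MvPolynomial σ R}
    (hq : ∀ j, (q j).IsHomogeneous m) {p : MvPolynomial σ R} (hp : p.IsHomogeneous (d + m))
    (hpq : p ∈ Ideal.span (Set.range q)) :
    ∃ u : ι → MvPolynomial σ R, (∀ j, (u j).IsHomogeneous d) ∧ u ⬝ᵥ q = p := by
  obtain ⟨h, hh⟩ := Ideal.mem_span_range_iff_exists_fun.mp hpq
  refine ⟨fun j => homogeneousComponent d (h j),
    fun j => homogeneousComponent_isHomogeneous _ _, ?_⟩
  rw [← homogeneousComponent_eq_self hp, ← hh, map_sum]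
  exact Finset.sum_congr rfl fun j _ => (homogeneousComponent_mul_of_isHomogeneous _ (hq j)).symm

theorem mem_span_X_pow_iff {s : Set σ} {N : ℕ} {p : MvPolynomial σ R} :
    p ∈ Ideal.span ((fun i => (X i : MvPolynomial σ R) ^ N) '' s) ↔
      ∀ m ∈ p.support, ∃ i ∈ s, N ≤ m i := by
  have := mem_ideal_span_monomial_image (x := p) (s := (fun i => Finsupp.single i N) '' s)
  simpa only [Set.image_image, ← X_pow_eq_monomial, Set.exists_mem_image,
    Finsupp.single_le_iff] using this

theorem isRegularFamily_X_pow (N : ℕ) :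
    IsRegularFamily fun i => (X i : MvPolynomial σ R) ^ N := by
  refine fun s i hi => isSMulRegular_quotient_iff_mem_of_mul_mem.mpr fun g hg => ?_
  rw [mem_span_X_pow_iff] at hg ⊢
  beta_reduce at hg
  intro m hm
  obtain ⟨j, hj, hN⟩ := hg (Finsupp.single i N + m) (by
    rwa [MvPolynomial.mem_support_iff, X_pow_eq_monomial, coeff_monomial_mul, one_mul,
      ← MvPolynomial.mem_support_iff])
  exact ⟨j, hj, by simpa [Finsupp.single_apply, (ne_of_mem_of_not_mem hj hi).symm] using hN⟩

theorem isHomogeneous_det [Fintype ι] [DecidableEq ι] {M : Matrix ι ι (MvPolynomial σ R)}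
    (hM : ∀ i j, (M i j).IsHomogeneous d) : M.det.IsHomogeneous (Fintype.card ι * d) := by
  rw [Matrix.det_apply]
  refine IsHomogeneous.sum _ _ _ fun τ _ => ?_
  have := IsHomogeneous.prod Finset.univ (fun i => M (τ i) i) (fun _ => d) fun i _ => hM _ _
  rw [Units.smul_def, ← mem_homogeneousSubmodule]
  exact zsmul_mem (by simpa using this) _

theorem exists_mulVec_eq_X_pow {K : Type*} [Field K] [IsAlgClosed K] [Finite σ] [Fintype ι]
    {q : ι → MvPolynomial σ K} (hq : ∀ j, (q j).IsHomogeneous m)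
    (hq0 : ∀ x : σ → K, x ≠ 0 → ∃ i, eval x (q i) ≠ 0) :
    ∃ (k : ℕ) (M : Matrix σ ι (MvPolynomial σ K)), (∀ i j, (M i j).IsHomogeneous k) ∧
      M.mulVec q = fun i => X i ^ (k + m) := by
  have X_mem_radical (i : σ) : X i ∈ (Ideal.span (Set.range q)).radical := by
    rw [← vanishingIdeal_zeroLocus_eq_radical (K := K), mem_vanishingIdeal_iff]
    intro x hx
    have hx0 : x = 0 := by
      by_contra hne
      obtain ⟨j, hj⟩ := hq0 x hne
      exact hj (by simpa using hx (q j) (Ideal.subset_span ⟨j, rfl⟩))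
    simp [hx0]
  choose e he using X_mem_radical
  cases nonempty_fintype σ
  have X_pow_mem (i : σ) : X i ^ (∑ i, e i + m) ∈ Ideal.span (Set.range q) :=
    Ideal.pow_mem_of_pow_mem _ (he i)
      ((Finset.single_le_sum_of_canonicallyOrdered (Finset.mem_univ i)).trans le_self_add)
  choose M hM hMq using fun i =>
    exists_homogeneous_coeffs hq (isHomogeneous_X_pow i _) (X_pow_mem i)
  exact ⟨_, M, hM, funext hMq⟩

-- The algebra `ℂ[x] ⧸ (x_i ^ (N + 1))` has a monomial basis, and its socle is spanned by the
-- product of the `x_i ^ N`.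
theorem mem_span_X_pow_succ_iff {R : Type*} [CommRing R] [Finite σ] {N : ℕ} {g : MvPolynomial σ R} :
    g ∈ Ideal.span (Set.range fun i => (X i : MvPolynomial σ R) ^ (N + 1)) ↔
      ∀ h, coeff (Finsupp.equivFunOnFinite.symm fun _ => N) (g * h) = 0 := by
  set top : σ →₀ ℕ := Finsupp.equivFunOnFinite.symm fun _ => N
  have top_apply (i : σ) : top i = N := rfl
  have mem_iff (g : MvPolynomial σ R) :
      g ∈ Ideal.span (Set.range fun i => (X i : MvPolynomial σ R) ^ (N + 1)) ↔
        ∀ m ∈ g.support, ∃ i, top i < m i := by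
    simpa [top_apply] using mem_span_X_pow_iff (s := Set.univ) (N := N + 1) (p := g)
  constructor
  · intro hg h
    by_contra hne
    obtain ⟨i, hi⟩ := (mem_iff _).mp (Ideal.mul_mem_right h _ hg) top (by simpa using hne)
    exact hi.false
  · refine fun hg => (mem_iff g).mpr fun m hm => ?_
    by_contra! hle
    have := coeff_mul_monomial m (top - m) (1 : R) g
    rw [add_tsub_cancel_of_le hle, hg, mul_one] at this
    exact MvPolynomial.mem_support_iff.mp hm this.symm

end Forms

section GradedQuotient

variable {n d e T : ℕ} {I : Ideal (MvPolynomial (Fin n) ℂ)}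

theorem mul_mem_gradedPiece {v w : MvPolynomial (Fin n) ℂ ⧸ I} (hv : v ∈ gradedPiece I d)
    (hw : w ∈ gradedPiece I e) : v * w ∈ gradedPiece I (d + e) := by
  obtain ⟨g, hg, rfl⟩ := hv
  obtain ⟨h, hh, rfl⟩ := hw
  exact ⟨g * h, IsHomogeneous.mul hg hh, map_mul (Ideal.Quotient.mkₐ ℂ I) g h⟩

theorem pow_mem_gradedPiece {v : MvPolynomial (Fin n) ℂ ⧸ I} (hv : v ∈ gradedPiece I d) (k : ℕ) :
    v ^ k ∈ gradedPiece I (k * d) := by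
  obtain ⟨g, hg, rfl⟩ := hv
  exact ⟨g ^ k, mul_comm d k ▸ IsHomogeneous.pow hg k, map_pow (Ideal.Quotient.mkₐ ℂ I) g k⟩

theorem iSup_gradedPiece : ⨆ d, gradedPiece I d = ⊤ := by
  let _ := gradedAlgebra (σ := Fin n) (R := ℂ)
  have iSup_homogeneousSubmodule : ⨆ d, homogeneousSubmodule (Fin n) ℂ d = ⊤ :=
    (DirectSum.Decomposition.isInternal _).submodule_iSup_eq_top
  simp only [gradedPiece]
  rw [← Submodule.map_iSup, iSup_homogeneousSubmodule, Submodule.map_top, LinearMap.range_eq_top]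
  exact Ideal.Quotient.mkₐ_surjective ℂ I

instance finiteDimensional_gradedPiece : FiniteDimensional ℂ (gradedPiece I d) :=
  Module.Finite.iff_fg.mpr ((homogeneousSubmodule_fg _ _ d).map _)

/-- The class of the linear form `∑ i, p i * x_i` in `ℂ[x] ⧸ I`. -/
noncomputable def linearForm (I : Ideal (MvPolynomial (Fin n) ℂ)) :
    (Fin n → ℂ) →ₗ[ℂ] MvPolynomial (Fin n) ℂ ⧸ I :=
  Fintype.linearCombination ℂ fun i => Ideal.Quotient.mk I (X i)

theorem range_linearForm : LinearMap.range (linearForm I) = gradedPiece I 1 := by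
  rw [linearForm, Fintype.range_linearCombination, gradedPiece, homogeneousSubmodule_one_eq_span_X,
    Submodule.map_span, ← Set.range_comp]
  rfl

theorem linearForm_mem_gradedPiece (p : Fin n → ℂ) : linearForm I p ∈ gradedPiece I 1 :=
  range_linearForm (I := I) ▸ LinearMap.mem_range_self _ p

theorem linearForm_injective {ι : Type*} [Finite ι] {m : ℕ} {q : ι → MvPolynomial (Fin n) ℂ}
    (hq : ∀ j, (q j).IsHomogeneous m) (hm : 1 < m) :
    Function.Injective (linearForm (Ideal.span (Set.range q))) := by
  refine (injective_iff_map_eq_zero _).mpr fun p hp => ?_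
  have sum_mem : ∑ i, p i • X i ∈ Ideal.span (Set.range q) := by
    rw [← Ideal.Quotient.eq_zero_iff_mem, map_sum]
    exact hp
  have sum_homogeneous : (∑ i, p i • X i).IsHomogeneous 1 :=
    IsHomogeneous.sum _ _ _ fun i _ =>
      Submodule.smul_mem (homogeneousSubmodule _ _ _) _ (isHomogeneous_X ℂ i)
  have sum_eq_zero := eq_zero_of_mem_span_of_degree_lt hq hm sum_homogeneous sum_mem
  exact funext (Fintype.linearIndependent_iff.mp (linearIndependent_X (Fin n) ℂ) p sum_eq_zero)

theorem exists_smul_eq_of_mul_eq_zero {ι : Type*} [Fintype ι] {q : ι → MvPolynomial (Fin n) ℂ}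
    (hq : ∀ j, (q j).IsHomogeneous (2 * d))
    (hsyz : ∀ s : ι → MvPolynomial (Fin n) ℂ, s ⬝ᵥ q = 0 → ∀ j, s j ∈ Ideal.span (Set.range q))
    {v w : MvPolynomial (Fin n) ℂ ⧸ Ideal.span (Set.range q)} (hv0 : v ≠ 0)
    (hv : v ∈ gradedPiece _ d) (hw : w ∈ gradedPiece _ d) (hvv : v * v = 0) (hvw : v * w = 0) :
    ∃ c : ℂ, c • v = w := by
  obtain ⟨a, ha, rfl⟩ := hv
  obtain ⟨b, hb, rfl⟩ := hw
  have exists_coeffs {c : MvPolynomial (Fin n) ℂ} (hc : c.IsHomogeneous d)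
      (hac : a * c ∈ Ideal.span (Set.range q)) :
      ∃ u : ι → ℂ, (fun j => C (u j)) ⬝ᵥ q = a * c := by
    have hac' : (a * c).IsHomogeneous (0 + 2 * d) := by
      simpa [two_mul] using IsHomogeneous.mul ha hc
    obtain ⟨u, hu, h⟩ := exists_homogeneous_coeffs hq hac' hac
    refine ⟨fun j => coeff 0 (u j), ?_⟩
    simp only [← homogeneousComponent_zero, homogeneousComponent_eq_self (hu _), h]
  obtain ⟨u, hu⟩ := exists_coeffs ha (Ideal.Quotient.eq_zero_iff_mem.mp hvv)
  obtain ⟨t, ht⟩ := exists_coeffs hb (Ideal.Quotient.eq_zero_iff_mem.mp hvw)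
  obtain ⟨j, hj⟩ : ∃ j, u j ≠ 0 := by
    by_contra! h
    have : a * a = 0 := by simp [← hu, h, dotProduct]
    simp [mul_self_eq_zero.mp this] at hv0
  have syzygy : (fun j => C (u j) * b - C (t j) * a) ⬝ᵥ q = 0 := by
    have : (fun j => C (u j) * b - C (t j) * a) =
        b • (fun j => C (u j)) - a • fun j => C (t j) := by
      simp only [mul_comm]
      rfl
    rw [this, sub_dotProduct, smul_dotProduct, smul_dotProduct, hu, ht, smul_eq_mul, smul_eq_mul]
    ring
  let π := Ideal.Quotient.mkₐ ℂ (Ideal.span (Set.range q))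
  have smul_eq : t j • π a = u j • π b := by
    rw [← map_smul, ← map_smul, eq_comm]
    exact Ideal.Quotient.eq.mpr (by simpa only [smul_eq_C_mul] using hsyz _ syzygy j)
  refine ⟨(u j)⁻¹ * t j, ?_⟩
  rw [mul_smul]
  exact (inv_smul_eq_iff₀ hj).mpr smul_eq

end GradedQuotient

section SocleFunctional

variable {n m d e T : ℕ} {I : Ideal (MvPolynomial (Fin n) ℂ)}

/-- A functional exhibiting the graded algebra `ℂ[x] ⧸ I` as Gorenstein of socle degree `T`: it is
concentrated in degree `T`, and `(v, w) ↦ Λ (v * w)` is nondegenerate. -/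
structure IsSocleFunctional (I : Ideal (MvPolynomial (Fin n) ℂ)) (T : ℕ)
    (Λ : (MvPolynomial (Fin n) ℂ ⧸ I) →ₗ[ℂ] ℂ) : Prop where
  apply_eq_zero : ∀ d ≠ T, ∀ v ∈ gradedPiece I d, Λ v = 0
  eq_zero_of_apply_mul : ∀ v, (∀ w, Λ (v * w) = 0) → v = 0

theorem exists_isSocleFunctional {q : Fin n → MvPolynomial (Fin n) ℂ}
    (hq : ∀ j, (q j).IsHomogeneous (m + 1))
    (hq0 : ∀ x : Fin n → ℂ, x ≠ 0 → ∃ i, eval x (q i) ≠ 0) :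
    ∃ Λ, IsSocleFunctional (Ideal.span (Set.range q)) (n * m) Λ := by
  obtain ⟨k, M, hM, hMq⟩ := exists_mulVec_eq_X_pow hq hq0
  set I := Ideal.span (Set.range q)
  let top : Fin n →₀ ℕ := Finsupp.equivFunOnFinite.symm fun _ => k + m
  have mem_iff (g) : g ∈ I ↔ ∀ h, coeff top (M.det * g * h) = 0 := by
    have hreg : IsRegularFamily (M.mulVec q) := hMq ▸ isRegularFamily_X_pow _
    rw [← hreg.det_mul_mem_iff, hMq, ← mem_span_X_pow_succ_iff, add_assoc]
  let Λ₀ : MvPolynomial (Fin n) ℂ →ₗ[ℂ] ℂ := lcoeff ℂ top ∘ₗ LinearMap.mulLeft ℂ M.det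
  have Λ₀_eq_zero (g) (hg : g ∈ I) : Λ₀ g = 0 := by
    change coeff top (M.det * g) = 0
    simpa only [mul_one] using (mem_iff g).mp hg 1
  refine ⟨(I.restrictScalars ℂ).liftQ Λ₀ Λ₀_eq_zero ∘ₗ
    (Submodule.Quotient.restrictScalarsEquiv ℂ I).symm.toLinearMap, ?_, ?_⟩
  · rintro d hd _ ⟨g, hg, rfl⟩
    change coeff top (M.det * g) = 0
    refine ((isHomogeneous_det hM).mul hg).coeff_eq_zero ?_
    have degree_top : top.degree = n * (k + m) := by
      simp [Finsupp.degree_eq_sum, top]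
    rw [degree_top, Fintype.card_fin, mul_add]
    omega
  · intro v hv
    obtain ⟨g, rfl⟩ := Ideal.Quotient.mk_surjective v
    refine Ideal.Quotient.eq_zero_iff_mem.mpr ((mem_iff g).mpr fun h => ?_)
    rw [mul_assoc]
    exact hv (Ideal.Quotient.mk I h)

namespace IsSocleFunctional

variable {Λ : (MvPolynomial (Fin n) ℂ ⧸ I) →ₗ[ℂ] ℂ} {v : MvPolynomial (Fin n) ℂ ⧸ I}

theorem eq_zero_of_apply_mul_gradedPiece (hΛ : IsSocleFunctional I T Λ) (hde : d + e = T)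
    (hv : v ∈ gradedPiece I d) (h : ∀ w ∈ gradedPiece I e, Λ (v * w) = 0) : v = 0 := by
  refine hΛ.eq_zero_of_apply_mul v fun w => ?_
  have hw : w ∈ ⨆ e, gradedPiece I e := iSup_gradedPiece ▸ Submodule.mem_top
  induction hw using Submodule.iSup_induction' with
  | mem e' w hw =>
    rcases eq_or_ne e' e with rfl | he
    · exact h w hw
    · exact hΛ.apply_eq_zero (d + e') (by omega) _ (mul_mem_gradedPiece hv hw)
  | zero => simp
  | add w w' _ _ hw hw' => rw [mul_add, map_add, hw, hw', add_zero]

theorem eq_zero_of_mul_linearForm (hΛ : IsSocleFunctional I T Λ) (hd : d ≠ T)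
    (hv : v ∈ gradedPiece I d) (h : ∀ p, v * linearForm I p = 0) : v = 0 := by
  have mul_X (i : Fin n) : v * Ideal.Quotient.mk I (X i) = 0 := by
    simpa [linearForm, Fintype.linearCombination_apply_single] using h (Pi.single i 1)
  refine hΛ.eq_zero_of_apply_mul v fun w => ?_
  obtain ⟨g, rfl⟩ := Ideal.Quotient.mk_surjective w
  induction g using MvPolynomial.induction_on with
  | C c =>
    have : v * Ideal.Quotient.mk I (C c) = c • v := by
      rw [mul_comm]
      exact (Algebra.smul_def c v).symm
    rw [this, map_smul, hΛ.apply_eq_zero d hd v hv, smul_zero]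
  | add g g' hg hg' => rw [map_add, mul_add, map_add, hg, hg', add_zero]
  | mul_X g i _ => rw [map_mul (Ideal.Quotient.mk I), mul_left_comm, mul_X, mul_zero, map_zero]

theorem finrank_gradedPiece_le (hΛ : IsSocleFunctional I T Λ) (hde : d + e = T) :
    finrank ℂ (gradedPiece I d) ≤ finrank ℂ (gradedPiece I e) := by
  let pairing : gradedPiece I d →ₗ[ℂ] Dual ℂ (gradedPiece I e) :=
    ((LinearMap.mul ℂ _).compr₂ Λ).domRestrict₁₂ _ _
  rw [← Subspace.dual_finrank_eq (V := gradedPiece I e)]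
  refine LinearMap.finrank_le_finrank_of_injective (f := pairing) ?_
  refine (injective_iff_map_eq_zero _).mpr fun v hv => Subtype.ext ?_
  exact hΛ.eq_zero_of_apply_mul_gradedPiece hde v.2 fun w hw => LinearMap.congr_fun hv ⟨w, hw⟩

theorem finrank_gradedPiece_eq (hΛ : IsSocleFunctional I T Λ) (hde : d + e = T) :
    finrank ℂ (gradedPiece I d) = finrank ℂ (gradedPiece I e) :=
  (hΛ.finrank_gradedPiece_le hde).antisymm (hΛ.finrank_gradedPiece_le (add_comm d e ▸ hde))

theorem exists_pow_mul_eq (hΛ : IsSocleFunctional I T Λ) {ℓ w : MvPolynomial (Fin n) ℂ ⧸ I}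
    (hℓ : ℓ ∈ gradedPiece I 1) (hde : d + (d + e) = T)
    (hinj : ∀ v ∈ gradedPiece I d, ℓ ^ e * v = 0 → v = 0) (hw : w ∈ gradedPiece I (d + e)) :
    ∃ v ∈ gradedPiece I d, ℓ ^ e * v = w := by
  have maps_to (v) (hv : v ∈ gradedPiece I d) : ℓ ^ e * v ∈ gradedPiece I (d + e) := by
    simpa [add_comm] using mul_mem_gradedPiece (pow_mem_gradedPiece hℓ e) hv
  let f : gradedPiece I d →ₗ[ℂ] gradedPiece I (d + e) :=
    (LinearMap.mulLeft ℂ (ℓ ^ e)).restrict maps_to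
  have f_injective : Function.Injective f := (injective_iff_map_eq_zero f).mpr fun v hv =>
    Subtype.ext (hinj v v.2 (congrArg Subtype.val hv))
  obtain ⟨v, hv⟩ := (LinearMap.injective_iff_surjective_of_finrank_eq_finrank
    (hΛ.finrank_gradedPiece_eq hde)).mp f_injective ⟨w, hw⟩
  exact ⟨v, v.2, congrArg Subtype.val hv⟩

theorem hasSLPQuot_of_injective (hΛ : IsSocleFunctional I T Λ) (p : Fin n → ℂ)
    (hinj : ∀ d e, d + (d + e) = T →
      ∀ v ∈ gradedPiece I d, linearForm I p ^ e * v = 0 → v = 0) : hasSLPQuot I T := by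
  set ℓ := linearForm I p
  obtain ⟨L, hL, hLℓ⟩ : ℓ ∈ gradedPiece I 1 := linearForm_mem_gradedPiece p
  refine ⟨L, hL, fun i k hik => ?_⟩
  rw [show Ideal.Quotient.mk I L = ℓ from hLℓ]
  rcases le_total (i + (i + k)) T with h | h
  · refine Or.inl fun v hv hkv => hinj i (T - 2 * i) (by omega) v hv ?_
    rw [show T - 2 * i = (T - 2 * i - k) + k by omega, pow_add, mul_assoc, hkv, mul_zero]
  · refine Or.inr fun w hw => ?_
    obtain ⟨j, hj⟩ : ∃ j, j + (i + k) = T := ⟨T - (i + k), by omega⟩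
    obtain ⟨c, rfl⟩ : ∃ c, i = j + c := ⟨i - j, by omega⟩
    rw [add_assoc] at hj hw
    obtain ⟨v, hv, rfl⟩ := hΛ.exists_pow_mul_eq (linearForm_mem_gradedPiece p) hj (hinj j _ hj) hw
    refine ⟨ℓ ^ c * v, ?_, by rw [pow_add]; ring⟩
    simpa [add_comm] using
      mul_mem_gradedPiece (pow_mem_gradedPiece (linearForm_mem_gradedPiece p) c) hv

end IsSocleFunctional

end SocleFunctional

section PolynomialFamilies

variable {K σ A B : Type*} [Field K] [CommRing A] [Algebra K A] [CommRing B] [Algebra K B]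

/-- The polynomial over `K` obtained by applying a functional to every coefficient; it turns
polynomial families of elements of `A` into polynomial functions. -/
noncomputable def mapCoeff (φ : A →ₗ[K] K) (t : MvPolynomial σ A) : MvPolynomial σ K :=
  ∑ m ∈ t.support, monomial m (φ (coeff m t))

theorem coeff_mapCoeff (φ : A →ₗ[K] K) (t : MvPolynomial σ A) (m : σ →₀ ℕ) :
    coeff m (mapCoeff φ t) = φ (coeff m t) := by
  classical
  simp only [mapCoeff, coeff_sum, coeff_monomial, Finset.sum_ite_eq']
  exact ite_eq_left_iff.mpr fun h => by rw [notMem_support_iff.mp h, map_zero]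

theorem eval_mapCoeff (φ : A →ₗ[K] K) (t : MvPolynomial σ A) (p : σ → K) :
    eval p (mapCoeff φ t) = φ (eval (algebraMap K A ∘ p) t) := by
  rw [eval_eq (algebraMap K A ∘ p) t, mapCoeff, map_sum, map_sum]
  refine Finset.sum_congr rfl fun m _ => ?_
  have prod_eq : ∏ i ∈ m.support, (algebraMap K A ∘ p) i ^ m i =
      algebraMap K A (∏ i ∈ m.support, p i ^ m i) := by simp
  rw [prod_eq, mul_comm, ← Algebra.smul_def, map_smul, smul_eq_mul, eval_monomial, mul_comm]
  rfl

theorem eq_zero_of_eval_algebraMap_eq_zero [Infinite K] {t : MvPolynomial σ A}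
    (h : ∀ p : σ → K, eval (algebraMap K A ∘ p) t = 0) : t = 0 := by
  ext m
  refine (forall_dual_apply_eq_zero_iff K _).mp fun φ => ?_
  have mapCoeff_eq_zero : mapCoeff φ t = 0 := MvPolynomial.funext fun p => by
    rw [eval_mapCoeff, h, map_zero, map_zero]
  rw [← coeff_mapCoeff, mapCoeff_eq_zero, coeff_zero]

theorem exists_eval_ne_zero_and_eval_ne_zero [Infinite K] {t : MvPolynomial σ A}
    {u : MvPolynomial σ B}
    (ht : ∃ p : σ → K, eval (algebraMap K A ∘ p) t ≠ 0)
    (hu : ∃ p : σ → K, eval (algebraMap K B ∘ p) u ≠ 0) :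
    ∃ p : σ → K, eval (algebraMap K A ∘ p) t ≠ 0 ∧ eval (algebraMap K B ∘ p) u ≠ 0 := by
  obtain ⟨p, hp⟩ := ht
  obtain ⟨r, hr⟩ := hu
  obtain ⟨φ, hφ⟩ := Projective.exists_dual_ne_zero K hp
  obtain ⟨χ, hχ⟩ := Projective.exists_dual_ne_zero K hr
  have ne_zero : mapCoeff φ t * mapCoeff χ u ≠ 0 :=
    mul_ne_zero (fun h => hφ (by rw [← eval_mapCoeff, h, map_zero]))
      (fun h => hχ (by rw [← eval_mapCoeff, h, map_zero]))
  obtain ⟨x, hx⟩ : ∃ x, eval x (mapCoeff φ t * mapCoeff χ u) ≠ 0 := by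
    by_contra! h
    exact ne_zero (MvPolynomial.funext fun x => by rw [h, map_zero])
  rw [map_mul, eval_mapCoeff, eval_mapCoeff] at hx
  exact ⟨x, fun h => hx (by simp [h]), fun h => hx (by simp [h])⟩

end PolynomialFamilies

section VectorField

variable {K σ A : Type*} [Field K] [CommRing A] [Algebra K A]

/-- The value at the point `p` of a polynomial vector field `ψ`. -/
noncomputable def fieldAt (ψ : σ → MvPolynomial σ K) (p : σ → K) : σ → K :=
  fun i => eval p (ψ i)

theorem fieldAt_X (p : σ → K) : fieldAt X p = p :=
  funext fun i => eval_X i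

variable [Fintype σ]

/-- The Jacobian at the point `p` of a polynomial vector field `ψ`. -/
noncomputable def jacobianAt (ψ : σ → MvPolynomial σ K) (p : σ → K) : (σ → K) →ₗ[K] σ → K :=
  (Matrix.of fun i j => eval p (pderiv j (ψ i))).mulVecLin

theorem jacobianAt_X (p : σ → K) : jacobianAt X p = LinearMap.id := by
  classical
  refine LinearMap.pi_ext' fun j => LinearMap.ext_ring ?_
  ext i
  simp [jacobianAt, pderiv_X, Pi.single_apply]

section

variable [DecidableEq σ]

theorem fieldAt_pderiv (ψ : σ → MvPolynomial σ K) (p : σ → K) (j : σ) :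
    fieldAt (fun i => pderiv j (ψ i)) p = jacobianAt ψ p (Pi.single j 1) := by
  ext i
  simp [fieldAt, jacobianAt]

/-- The polynomial family `p ↦ lin (ψ p)`, for a linear map `lin` and a polynomial vector field
`ψ`. -/
noncomputable def fieldForm (lin : (σ → K) →ₗ[K] A) (ψ : σ → MvPolynomial σ K) :
    MvPolynomial σ A :=
  ∑ i, map (algebraMap K A) (ψ i) * C (lin (Pi.single i 1))

theorem eval_fieldForm (lin : (σ → K) →ₗ[K] A) (ψ : σ → MvPolynomial σ K) (p : σ → K) :
    eval (algebraMap K A ∘ p) (fieldForm lin ψ) = lin (fieldAt ψ p) := by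
  conv_rhs => rw [pi_eq_sum_univ' (fieldAt ψ p), map_sum]
  simp only [map_smul]
  simp only [fieldForm, map_sum, map_mul, eval_C, eval_map, ← aeval_def,
    aeval_algebraMap_apply, Algebra.smul_def]
  rfl

theorem pderiv_fieldForm (lin : (σ → K) →ₗ[K] A) (ψ : σ → MvPolynomial σ K) (j : σ) :
    pderiv j (fieldForm lin ψ) = fieldForm lin fun i => pderiv j (ψ i) := by
  simp only [fieldForm, map_sum, pderiv_mul, pderiv_map, pderiv_C, mul_zero, add_zero]

end

theorem deriv_pow_mul_pow_eq_zero [Infinite K] (lin : (σ → K) →ₗ[K] A)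
    (ψ : σ → MvPolynomial σ K) (a b : ℕ)
    (h : ∀ p, lin p ^ a * lin (fieldAt ψ p) ^ b = 0) (p v : σ → K) :
    a * (lin p ^ (a - 1) * lin (fieldAt ψ p) ^ b * lin v) +
      b * (lin p ^ a * lin (fieldAt ψ p) ^ (b - 1) * lin (jacobianAt ψ p v)) = 0 := by
  classical
  have family_eq_zero : fieldForm lin X ^ a * fieldForm lin ψ ^ b = 0 :=
    eq_zero_of_eval_algebraMap_eq_zero fun p => by
      rw [map_mul, map_pow, map_pow, eval_fieldForm, eval_fieldForm, fieldAt_X, h]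
  let D : (σ → K) →ₗ[K] A :=
    LinearMap.mulLeft K (a * (lin p ^ (a - 1) * lin (fieldAt ψ p) ^ b)) ∘ₗ lin +
      LinearMap.mulLeft K (b * (lin p ^ a * lin (fieldAt ψ p) ^ (b - 1))) ∘ₗ lin ∘ₗ jacobianAt ψ p
  suffices D = 0 by
    simpa [D, mul_assoc] using LinearMap.congr_fun this v
  refine LinearMap.pi_ext' fun j => LinearMap.ext_ring ?_
  have pderiv_eq_zero := congrArg (eval (algebraMap K A ∘ p) ∘ pderiv j) family_eq_zero
  simp only [Function.comp_apply, pderiv_mul, pderiv_pow, pderiv_fieldForm, map_add, map_mul,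
    map_pow, map_natCast, map_zero, eval_fieldForm, fieldAt_X, fieldAt_pderiv, jacobianAt_X,
    LinearMap.id_apply] at pderiv_eq_zero
  simp only [D, LinearMap.comp_apply, LinearMap.add_apply, LinearMap.mulLeft_apply,
    LinearMap.single_apply, LinearMap.zero_apply]
  linear_combination pderiv_eq_zero

end VectorField

section KernelVectors

variable {K A V : Type*} [Field K] [CommRing A] [Algebra K A] [AddCommGroup V] [Module K V]
  [FiniteDimensional K V]

theorem finrank_lt_finrank_comap_span_singleton_add {D : V →ₗ[K] V} {U : Submodule K V} {ψ : V}
    (hD : LinearMap.range D ≤ U) (hψ : ψ ∈ U) (hψ0 : ψ ≠ 0) :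
    finrank K V < finrank K ((K ∙ ψ).comap D) + finrank K U := by
  let ψU : U := ⟨ψ, hψ⟩
  let E : V →ₗ[K] U ⧸ (K ∙ ψU) := (K ∙ ψU).mkQ ∘ₗ D.codRestrict U fun v => hD ⟨v, rfl⟩
  have ker_le : LinearMap.ker E ≤ (K ∙ ψ).comap D := fun v hv => by
    obtain ⟨c, hc⟩ := Submodule.mem_span_singleton.mp
      ((Submodule.Quotient.mk_eq_zero _).mp (LinearMap.mem_ker.mp hv))
    exact Submodule.mem_span_singleton.mpr ⟨c, congrArg Subtype.val hc⟩
  have rank_nullity := E.finrank_range_add_finrank_ker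
  have finrank_quotient := Submodule.finrank_quotient_add_finrank (K ∙ ψU)
  rw [finrank_span_singleton (fun h => hψ0 (congrArg Subtype.val h))] at finrank_quotient
  have := Submodule.finrank_mono ker_le
  have := Submodule.finrank_le (LinearMap.range E)
  omega

theorem comap_span_singleton_eq_of_le {D : V →ₗ[K] V} {U W : Submodule K V} {ψ : V}
    (hV : finrank K V ≤ 4) (hD : LinearMap.range D ≤ U) (hψ : ψ ∈ U) (hψ0 : ψ ≠ 0) (hUW : U < W)
    (hW : W ≠ ⊤) (hle : (K ∙ ψ).comap D ≤ W) : (K ∙ ψ).comap D = W := by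
  refine Submodule.eq_of_le_of_finrank_le hle ?_
  have := finrank_lt_finrank_comap_span_singleton_add hD hψ hψ0
  have := Submodule.finrank_lt_finrank_of_lt hUW
  have := Submodule.finrank_lt hW
  omega

/-- The relations satisfied in a commutative algebra by `ℓ = lin x` and `s = lin ψ` when `ψ` is the
value at `x`, and `D` the Jacobian at `x`, of a vector field with `ℓ ^ 2 * s = 0` identically. -/
structure IsKernelJet (lin : V →ₗ[K] A) (x ψ : V) (D : V →ₗ[K] V) : Prop where
  sq_mul : lin x ^ 2 * lin ψ = 0
  deriv_sq_mul : ∀ v, 2 * (lin x * lin ψ * lin v) + lin x ^ 2 * lin (D v) = 0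
  mul_sq : lin x * lin ψ ^ 2 = 0
  deriv_mul_sq : ∀ v, lin ψ ^ 2 * lin v + 2 * (lin x * lin ψ * lin (D v)) = 0
  cube : lin ψ ^ 3 = 0
  deriv_cube : ∀ v, lin ψ ^ 2 * lin (D v) = 0

theorem IsKernelJet.sq_mul_eq_zero {lin : V →ₗ[K] A} {x ψ : V} {D : V →ₗ[K] V}
    (h : IsKernelJet lin x ψ D) (hV : finrank K V ≤ 4) (hx : lin x ^ 4 ≠ 0) (v : V) :
    lin ψ ^ 2 * lin v = 0 := by
  rcases eq_or_ne ψ 0 with rfl | hψ0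
  · simp
  let W : Submodule K V := LinearMap.ker (LinearMap.mulLeft K (lin ψ ^ 2) ∘ₗ lin)
  let U : Submodule K V := W ⊓ LinearMap.ker (LinearMap.mulLeft K (lin x ^ 3) ∘ₗ lin)
  have mem_W (u) : u ∈ W ↔ lin ψ ^ 2 * lin u = 0 := Iff.rfl
  have mem_U (u) : u ∈ U ↔ lin ψ ^ 2 * lin u = 0 ∧ lin x ^ 3 * lin u = 0 := Iff.rfl
  by_contra hv
  have range_le : LinearMap.range D ≤ U := by
    rintro _ ⟨u, rfl⟩
    exact (mem_U _).mpr ⟨h.deriv_cube u, by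
      linear_combination lin x * h.deriv_sq_mul u - 2 * lin u * h.sq_mul⟩
  have ψ_mem : ψ ∈ U := (mem_U _).mpr
    ⟨by linear_combination h.cube, by linear_combination lin x * h.sq_mul⟩
  have U_lt : U < W := lt_of_le_of_ne inf_le_left fun hUW => hx <| by
    have x_mem : x ∈ U := hUW ▸ (mem_W x).mpr (by linear_combination h.mul_sq)
    linear_combination ((mem_U x).mp x_mem).2
  have W_ne_top : W ≠ ⊤ := fun hW => hv ((mem_W v).mp (hW ▸ Submodule.mem_top))
  have comap_le : (K ∙ ψ).comap D ≤ W := fun u hu => by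
    obtain ⟨c, hc⟩ := Submodule.mem_span_singleton.mp hu
    have := h.deriv_mul_sq u
    rw [← hc, map_smul, Algebra.smul_def] at this
    exact (mem_W u).mpr (by linear_combination this - 2 * algebraMap K A c * h.mul_sq)
  have DDv_mem : D v ∈ (K ∙ ψ).comap D :=
    comap_span_singleton_eq_of_le hV range_le ψ_mem hψ0 U_lt W_ne_top comap_le ▸
      (range_le ⟨v, rfl⟩).1
  obtain ⟨c, hc⟩ := Submodule.mem_span_singleton.mp DDv_mem
  have mul_mul_eq_zero := h.deriv_sq_mul (D v)
  rw [← hc, map_smul, Algebra.smul_def] at mul_mul_eq_zero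
  exact hv <| by
    linear_combination h.deriv_mul_sq v - mul_mul_eq_zero + algebraMap K A c * h.sq_mul

end KernelVectors
section GordanNoether

variable {n T : ℕ} {I : Ideal (MvPolynomial (Fin n) ℂ)}
  {Λ : (MvPolynomial (Fin n) ℂ ⧸ I) →ₗ[ℂ] ℂ} {ψ : Fin n → MvPolynomial (Fin n) ℂ}

theorem natCast_mul_eq_zero_iff {A : Type*} [Ring A] [Algebra ℂ A] {k : ℕ} (hk : k ≠ 0) {a : A} :
    k * a = 0 ↔ a = 0 := by
  rw [← nsmul_eq_mul, ← Nat.cast_smul_eq_nsmul ℂ, smul_eq_zero_iff_right (Nat.cast_ne_zero.mpr hk)]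

namespace IsSocleFunctional

theorem exists_linearForm_pow_ne_zero [Nontrivial (MvPolynomial (Fin n) ℂ ⧸ I)]
    (hΛ : IsSocleFunctional I T Λ) {k : ℕ} (hk : k ≤ T) : ∃ p, linearForm I p ^ k ≠ 0 := by
  induction k with
  | zero => exact ⟨0, by simp⟩
  | succ k ih =>
    by_contra! h
    obtain ⟨p, hp⟩ := ih (by omega)
    refine hp (hΛ.eq_zero_of_mul_linearForm (d := k * 1) (by omega)
      (pow_mem_gradedPiece (linearForm_mem_gradedPiece p) k) fun v => ?_)
    have := deriv_pow_mul_pow_eq_zero (linearForm I) X (k + 1) 0 (by simpa using h) p v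
    refine (natCast_mul_eq_zero_iff k.succ_ne_zero).mp ?_
    simpa using this

end IsSocleFunctional

/-- A polynomial vector field `ψ` with values `ψ p` in the kernel of multiplication by
`linearForm I p ^ 2` in degree one. -/
def IsKernelField (I : Ideal (MvPolynomial (Fin n) ℂ)) (ψ : Fin n → MvPolynomial (Fin n) ℂ) :
    Prop :=
  ∀ p, linearForm I p ^ 2 * linearForm I (fieldAt ψ p) = 0

/-- The linear forms killed by a nonzero linear form of square zero are its multiples. This holds
when `I` is generated by a regular sequence of quadrics. -/
def HasLineAnnihilators (I : Ideal (MvPolynomial (Fin n) ℂ)) : Prop :=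
  ∀ a b, linearForm I a ≠ 0 → linearForm I a * linearForm I a = 0 →
    linearForm I a * linearForm I b = 0 → ∃ c : ℂ, c • linearForm I a = linearForm I b

namespace IsKernelField

theorem deriv_sq_mul (hψ : IsKernelField I ψ) (p v : Fin n → ℂ) :
    2 * (linearForm I p * linearForm I (fieldAt ψ p) * linearForm I v) +
      linearForm I p ^ 2 * linearForm I (jacobianAt ψ p v) = 0 := by
  simpa using deriv_pow_mul_pow_eq_zero (linearForm I) ψ 2 1 (fun p => by simpa using hψ p) p v

theorem mul_sq_eq_zero (hψ : IsKernelField I ψ) (hΛ : IsSocleFunctional I T Λ) (hT : T ≠ 3)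
    (p : Fin n → ℂ) : linearForm I p * linearForm I (fieldAt ψ p) ^ 2 = 0 := by
  refine hΛ.eq_zero_of_mul_linearForm (d := 1 + 2 * 1) hT.symm (mul_mem_gradedPiece
    (linearForm_mem_gradedPiece p) (pow_mem_gradedPiece (linearForm_mem_gradedPiece _) 2))
    fun v => (natCast_mul_eq_zero_iff two_ne_zero).mp ?_
  push_cast
  linear_combination linearForm I (fieldAt ψ p) * hψ.deriv_sq_mul p v -
    linearForm I (jacobianAt ψ p v) * hψ p

theorem deriv_mul_sq (hψ : IsKernelField I ψ) (hΛ : IsSocleFunctional I T Λ) (hT : T ≠ 3)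
    (p v : Fin n → ℂ) :
    linearForm I (fieldAt ψ p) ^ 2 * linearForm I v +
      2 * (linearForm I p * linearForm I (fieldAt ψ p) * linearForm I (jacobianAt ψ p v)) = 0 := by
  simpa using deriv_pow_mul_pow_eq_zero (linearForm I) ψ 1 2
    (by simpa using hψ.mul_sq_eq_zero hΛ hT) p v

theorem cube_eq_zero (hψ : IsKernelField I ψ) (hΛ : IsSocleFunctional I T Λ) (hT : T ≠ 3)
    (p : Fin n → ℂ) : linearForm I (fieldAt ψ p) ^ 3 = 0 := by
  set ℓ := linearForm I p
  set s := linearForm I (fieldAt ψ p)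
  set t := linearForm I (jacobianAt ψ p (fieldAt ψ p))
  have sq_mul_jacobian : ℓ ^ 2 * t = 0 := by
    linear_combination hψ.deriv_sq_mul p (fieldAt ψ p) - 2 * hψ.mul_sq_eq_zero hΛ hT p
  have mul_mul_jacobian : ℓ * s * t = 0 := by
    refine hΛ.eq_zero_of_mul_linearForm (d := 1 + 1 + 1) hT.symm (mul_mem_gradedPiece
      (mul_mem_gradedPiece (linearForm_mem_gradedPiece _) (linearForm_mem_gradedPiece _))
      (linearForm_mem_gradedPiece _)) fun v => (natCast_mul_eq_zero_iff two_ne_zero).mp ?_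
    push_cast
    linear_combination t * hψ.deriv_sq_mul p v -
      linearForm I (jacobianAt ψ p v) * sq_mul_jacobian
  linear_combination hψ.deriv_mul_sq hΛ hT p (fieldAt ψ p) - 2 * mul_mul_jacobian

theorem isKernelJet (hψ : IsKernelField I ψ) (hΛ : IsSocleFunctional I T Λ) (hT : T ≠ 3)
    (p : Fin n → ℂ) : IsKernelJet (linearForm I) p (fieldAt ψ p) (jacobianAt ψ p) where
  sq_mul := hψ p
  deriv_sq_mul := hψ.deriv_sq_mul p
  mul_sq := hψ.mul_sq_eq_zero hΛ hT p
  deriv_mul_sq := hψ.deriv_mul_sq hΛ hT p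
  cube := hψ.cube_eq_zero hΛ hT p
  deriv_cube v := (natCast_mul_eq_zero_iff three_ne_zero).mp <| by
    simpa using deriv_pow_mul_pow_eq_zero (linearForm I) ψ 0 3
      (by simpa using hψ.cube_eq_zero hΛ hT) p v

theorem sq_eq_zero_of_pow_ne_zero (hψ : IsKernelField I ψ) (hΛ : IsSocleFunctional I T Λ)
    (hT : 4 ≤ T) (hn : n ≤ 4) {p : Fin n → ℂ} (hp : linearForm I p ^ 4 ≠ 0) :
    linearForm I (fieldAt ψ p) ^ 2 = 0 :=
  hΛ.eq_zero_of_mul_linearForm (d := 2 * 1) (by omega)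
    (pow_mem_gradedPiece (linearForm_mem_gradedPiece _) 2)
    ((hψ.isKernelJet hΛ (by omega) p).sq_mul_eq_zero (by simpa using hn) hp)

theorem sq_eq_zero [Nontrivial (MvPolynomial (Fin n) ℂ ⧸ I)] (hψ : IsKernelField I ψ)
    (hΛ : IsSocleFunctional I T Λ) (hT : 4 ≤ T) (hn : n ≤ 4) (p : Fin n → ℂ) :
    linearForm I (fieldAt ψ p) ^ 2 = 0 := by
  by_contra hp
  obtain ⟨r, hr, hr'⟩ := exists_eval_ne_zero_and_eval_ne_zero (K := ℂ)
    (t := fieldForm (linearForm I) X ^ 4) (u := fieldForm (linearForm I) ψ ^ 2)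
    (by simpa only [map_pow, eval_fieldForm, fieldAt_X] using hΛ.exists_linearForm_pow_ne_zero hT)
    ⟨p, by rwa [map_pow, eval_fieldForm]⟩
  rw [map_pow, eval_fieldForm] at hr hr'
  exact hr' (hψ.sq_eq_zero_of_pow_ne_zero hΛ hT hn (fieldAt_X r ▸ hr))

theorem exists_smul_eq_jacobian (hI : HasLineAnnihilators I)
    (hsq : ∀ p, linearForm I (fieldAt ψ p) ^ 2 = 0) {p : Fin n → ℂ}
    (hp : linearForm I (fieldAt ψ p) ≠ 0) (v : Fin n → ℂ) :
    ∃ c : ℂ, c • linearForm I (fieldAt ψ p) = linearForm I (jacobianAt ψ p v) := by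
  refine hI _ _ hp (by rw [← sq, hsq]) ((natCast_mul_eq_zero_iff two_ne_zero).mp ?_)
  simpa using deriv_pow_mul_pow_eq_zero (linearForm I) ψ 0 2 (by simpa using hsq) p v

theorem eq_zero [Nontrivial (MvPolynomial (Fin n) ℂ ⧸ I)] (hψ : IsKernelField I ψ)
    (hI : HasLineAnnihilators I) (hΛ : IsSocleFunctional I T Λ) (hT : 4 ≤ T) (hn : n ≤ 4)
    (p : Fin n → ℂ) : linearForm I (fieldAt ψ p) = 0 := by
  have jac {p : Fin n → ℂ} (hp : linearForm I (fieldAt ψ p) ≠ 0) (v : Fin n → ℂ) :=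
    exists_smul_eq_jacobian hI (hψ.sq_eq_zero hΛ hT hn) hp v
  have mul_eq_zero (p) : linearForm I p * linearForm I (fieldAt ψ p) = 0 := by
    by_cases hp : linearForm I (fieldAt ψ p) = 0
    · rw [hp, mul_zero]
    refine hΛ.eq_zero_of_mul_linearForm (d := 1 + 1) (by omega) (mul_mem_gradedPiece
      (linearForm_mem_gradedPiece _) (linearForm_mem_gradedPiece _))
      fun v => (natCast_mul_eq_zero_iff two_ne_zero).mp ?_
    have deriv := hψ.deriv_sq_mul p v
    obtain ⟨c, hc⟩ := jac hp v
    rwa [← hc, mul_smul_comm, hψ, smul_zero, add_zero] at deriv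
  by_contra hp
  refine hp (hΛ.eq_zero_of_mul_linearForm (d := 1) (by omega) (linearForm_mem_gradedPiece _)
    fun v => ?_)
  have deriv := deriv_pow_mul_pow_eq_zero (linearForm I) ψ 1 1 (by simpa using mul_eq_zero) p v
  obtain ⟨c, hc⟩ := jac hp v
  simpa [← hc, mul_smul_comm, mul_eq_zero] using deriv

end IsKernelField

end GordanNoether
section Hessian

variable {n : ℕ} {I : Ideal (MvPolynomial (Fin n) ℂ)}
  {Λ : (MvPolynomial (Fin n) ℂ ⧸ I) →ₗ[ℂ] ℂ}

/-- Up to the factor `12`, the Hessian of the quartic form `p ↦ Λ (linearForm I p ^ 4)`. -/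
noncomputable def quarticHessian (Λ : (MvPolynomial (Fin n) ℂ ⧸ I) →ₗ[ℂ] ℂ) :
    Matrix (Fin n) (Fin n) (MvPolynomial (Fin n) ℂ) :=
  Matrix.of fun i j => mapCoeff Λ (fieldForm (linearForm I) X ^ 2 *
    C (linearForm I (Pi.single i 1) * linearForm I (Pi.single j 1)))

theorem quarticHessian_map_eval_mulVec (p v : Fin n → ℂ) (i : Fin n) :
    ((quarticHessian Λ).map (eval p)).mulVec v i =
      Λ (linearForm I p ^ 2 * linearForm I (Pi.single i 1) * linearForm I v) := by
  conv_rhs => rw [pi_eq_sum_univ' v]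
  simp only [Matrix.mulVec, dotProduct, Matrix.map_apply, quarticHessian, Matrix.of_apply,
    eval_mapCoeff, map_mul, map_pow, eval_fieldForm, fieldAt_X, eval_C, map_sum, map_smul,
    Finset.mul_sum, mul_smul_comm, smul_eq_mul]
  exact Finset.sum_congr rfl fun j _ => by rw [mul_comm, mul_assoc]

theorem isKernelField_of_quarticHessian_mulVec_eq_zero (hΛ : IsSocleFunctional I 4 Λ)
    {ψ : Fin n → MvPolynomial (Fin n) ℂ} (hψ : (quarticHessian Λ).mulVec ψ = 0) :
    IsKernelField I ψ := by
  intro p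
  refine hΛ.eq_zero_of_apply_mul_gradedPiece (d := 2 * 1 + 1) (e := 1) rfl
    (mul_mem_gradedPiece (pow_mem_gradedPiece (linearForm_mem_gradedPiece p) 2)
      (linearForm_mem_gradedPiece _)) fun w hw => ?_
  obtain ⟨a, rfl⟩ := range_linearForm (I := I) ▸ hw
  let f : (Fin n → ℂ) →ₗ[ℂ] ℂ :=
    Λ ∘ₗ LinearMap.mulLeft ℂ (linearForm I p ^ 2 * linearForm I (fieldAt ψ p)) ∘ₗ linearForm I
  suffices f = 0 from LinearMap.congr_fun this a
  refine LinearMap.pi_ext' fun i => LinearMap.ext_ring ?_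
  have entry : eval p ((quarticHessian Λ).mulVec ψ i) = 0 := by rw [hψ, Pi.zero_apply, map_zero]
  rw [RingHom.map_mulVec] at entry
  change ((quarticHessian Λ).map (eval p)).mulVec (fieldAt ψ p) i = 0 at entry
  rw [quarticHessian_map_eval_mulVec, mul_right_comm] at entry
  exact entry

theorem det_quarticHessian_ne_zero [Nontrivial (MvPolynomial (Fin n) ℂ ⧸ I)]
    (hΛ : IsSocleFunctional I 4 Λ) (hI : HasLineAnnihilators I)
    (hlin : Function.Injective (linearForm I)) (hn : n ≤ 4) : (quarticHessian Λ).det ≠ 0 := by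
  intro hdet
  obtain ⟨ψ, hψ0, hψ⟩ := Matrix.exists_mulVec_eq_zero_iff.mpr hdet
  have hfield := isKernelField_of_quarticHessian_mulVec_eq_zero hΛ hψ
  refine hψ0 (funext fun i => MvPolynomial.funext fun p => ?_)
  have fieldAt_eq_zero : fieldAt ψ p = 0 :=
    hlin (by rw [hfield.eq_zero hI hΛ le_rfl hn, map_zero])
  rw [Pi.zero_apply, map_zero]
  exact congrFun fieldAt_eq_zero i

theorem eq_zero_of_sq_mul_eq_zero {p : Fin n → ℂ} (hp : eval p (quarticHessian Λ).det ≠ 0)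
    {v : MvPolynomial (Fin n) ℂ ⧸ I} (hv : v ∈ gradedPiece I 1)
    (h : linearForm I p ^ 2 * v = 0) : v = 0 := by
  obtain ⟨a, rfl⟩ := range_linearForm (I := I) ▸ hv
  rw [RingHom.map_det] at hp
  have mulVec_eq_zero : ((quarticHessian Λ).map (eval p)).mulVec a = 0 := funext fun i => by
    rw [quarticHessian_map_eval_mulVec, mul_right_comm, h, zero_mul, map_zero, Pi.zero_apply]
  rw [Matrix.eq_zero_of_mulVec_eq_zero hp mulVec_eq_zero, map_zero]

theorem eq_zero_of_mul_eq_zero_of_mem_gradedPiece_zero {u v : MvPolynomial (Fin n) ℂ ⧸ I}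
    (hu : u ≠ 0) (hv : v ∈ gradedPiece I 0) (h : u * v = 0) : v = 0 := by
  obtain ⟨g, hg, rfl⟩ := hv
  rw [homogeneousSubmodule_zero] at hg
  obtain ⟨c, rfl⟩ := Submodule.mem_one.mp hg
  have smul_eq_zero : c • u = 0 := by
    rw [← h, mul_comm]
    exact Algebra.smul_def c u
  simp [(smul_eq_zero_iff_left hu).mp smul_eq_zero]

theorem hasSLPQuot_four_of_hasLineAnnihilators [Nontrivial (MvPolynomial (Fin n) ℂ ⧸ I)]
    (hΛ : IsSocleFunctional I 4 Λ) (hI : HasLineAnnihilators I)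
    (hlin : Function.Injective (linearForm I)) (hn : n ≤ 4) : hasSLPQuot I 4 := by
  obtain ⟨r, hr⟩ : ∃ r, eval r (quarticHessian Λ).det ≠ 0 := by
    by_contra! h
    exact det_quarticHessian_ne_zero hΛ hI hlin hn
      (MvPolynomial.funext fun r => by rw [h, map_zero])
  obtain ⟨p, hp, hdet⟩ := exists_eval_ne_zero_and_eval_ne_zero (K := ℂ)
    (t := fieldForm (linearForm I) X ^ 4) (u := (quarticHessian Λ).det)
    (by simpa only [map_pow, eval_fieldForm, fieldAt_X] using
      hΛ.exists_linearForm_pow_ne_zero le_rfl) ⟨r, hr⟩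
  rw [map_pow, eval_fieldForm, fieldAt_X] at hp
  refine hΛ.hasSLPQuot_of_injective p fun d e hde v hv h => ?_
  obtain ⟨rfl, rfl⟩ | ⟨rfl, rfl⟩ | ⟨rfl, rfl⟩ :
      d = 0 ∧ e = 4 ∨ d = 1 ∧ e = 2 ∨ d = 2 ∧ e = 0 := by omega
  · exact eq_zero_of_mul_eq_zero_of_mem_gradedPiece_zero hp hv h
  · exact eq_zero_of_sq_mul_eq_zero hdet hv h
  · rwa [pow_zero, one_mul] at h

end Hessian

theorem milnor_algebra_smooth_cubic_surface_SLP_general (q : Fin 4 → MvPolynomial (Fin 4) ℂ)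
    (hq : ∀ j, (q j).IsHomogeneous 2) (hsm : ∀ x : Fin 4 → ℂ, x ≠ 0 → ∃ i, eval x (q i) ≠ 0) :
    hasSLPQuot (Ideal.span (Set.range q)) 4 := by
  obtain ⟨k, M, -, hM⟩ := exists_mulVec_eq_X_pow hq hsm
  have hreg : IsRegularFamily (M.mulVec q) := hM ▸ isRegularFamily_X_pow _
  obtain ⟨Λ, hΛ⟩ := exists_isSocleFunctional hq hsm
  have hlin := linearForm_injective hq one_lt_two
  have : Nontrivial (MvPolynomial (Fin 4) ℂ ⧸ Ideal.span (Set.range q)) := hlin.nontrivial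
  have hI : HasLineAnnihilators (Ideal.span (Set.range q)) := fun a b h0 haa hab =>
    exists_smul_eq_of_mul_eq_zero (d := 1) hq (fun s => hreg.syzygy_mem) h0
      (linearForm_mem_gradedPiece a) (linearForm_mem_gradedPiece b) haa hab
  exact hasSLPQuot_four_of_hasLineAnnihilators hΛ hI hlin le_rfl

/-- **Proposition.** For any smooth cubic surface `V(f) ⊂ ℙ^3`, the Milnor algebra
`M(f) = R/J(f)` (an Artinian Gorenstein algebra of socle degree `(3+1)(3-2) = 4`)
has the Strong Lefschetz Property. -/
theorem milnor_algebra_smooth_cubic_surface_SLP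
    (f : MvPolynomial (Fin 4) ℂ) (hf : f.IsHomogeneous 3)
    (hsm : ∀ x : Fin 4 → ℂ, x ≠ 0 → ∃ i : Fin 4, eval x (pderiv i f) ≠ 0) :
    hasSLPQuot (jacobianIdeal f) 4 :=
  milnor_algebra_smooth_cubic_surface_SLP_general (fun i => pderiv i f) (fun _ => hf.pderiv) hsm
end
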